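/- The operator L̃ is a bounded positive self-adjoint operator on L²(I), and B is a compact self-adjoint operator on L²(I). Both L̃ and B commute with the parity operator P. Moreover B ≤ 1 (as a quadratic form), and B ψ = ψ holds if and only if the 2π-periodic extension of V^{−1/2} ψ is a collisional invariant, i.e. satisfies g(x) + g(h(x,z)) − g(z) − g(x−z+h(x,z)) = 0 for almost every (x,z), with g = V^{−1/2}ψ extended periodically. -/

import Mathlib

open MeasureTheory Real Set Filter
open scoped Topology ENNReal ComplexConjugate

noncomputable section

/-- The fundamental periodic cell `I = [0, 2π)`. -/
def II : Set ℝ := Set.Ico 0 (2 * π)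

/-- Lebesgue measure restricted to `I`. -/
def muI : Measure ℝ := volume.restrict II

/-- The dispersion relation `ω(x) = |sin(x/2)|`. -/
def omg (x : ℝ) : ℝ := |Real.sin (x / 2)|

/-- `Ω(x,y,z) = ω(x) + ω(y) − ω(z) − ω(x+y−z)`. -/
def Omg (x y z : ℝ) : ℝ := omg x + omg y - omg z - omg (x + y - z)

/-- The representative of `x` modulo `2π` lying in `[0, 2π)`. -/
def mod2pi (x : ℝ) : ℝ := x - 2 * π * (⌊x / (2 * π)⌋ : ℝ)

/-- `h` on the fundamental cell: `h(x,z) = (z−x)/2 + 2 arcsin( tan(|z−x|/4) cos((x+z)/4) )`. -/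
def h0 (x z : ℝ) : ℝ :=
  (z - x) / 2 + 2 * Real.arcsin (Real.tan (|z - x| / 4) * Real.cos ((x + z) / 4))

/-- The extension of `h` to all of `ℝ²`: `h(x,z) = h(x mod 2π, z mod 2π) − (x − (x mod 2π))`. -/
def hFPU (x z : ℝ) : ℝ := h0 (mod2pi x) (mod2pi z) - (x - mod2pi x)

/-- `F₊(x,y) = (cos(x/2)+cos(y/2))² + 4 sin(x/2) sin(y/2)`. -/
def Fp (x y : ℝ) : ℝ :=
  (Real.cos (x / 2) + Real.cos (y / 2)) ^ 2 + 4 * Real.sin (x / 2) * Real.sin (y / 2)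

/-- `F₋(x,y) = (cos(x/2)+cos(y/2))² − 4 sin(x/2) sin(y/2)`. -/
def Fm (x y : ℝ) : ℝ :=
  (Real.cos (x / 2) + Real.cos (y / 2)) ^ 2 - 4 * Real.sin (x / 2) * Real.sin (y / 2)

/-- The kernel `K₁(x,y) = 4·𝟙(F₋(x,y) > 0)/√(F₋(x,y))`. -/
def K1 (x y : ℝ) : ℝ := if 0 < Fm x y then 4 / Real.sqrt (Fm x y) else 0

/-- The kernel `K₂(x,y) = 2/√(F₊(x,y))`. -/
def K2 (x y : ℝ) : ℝ := 2 / Real.sqrt (Fp x y)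

/-- `V(x) = ∫_I K₂(x,y) dy`. -/
def VV (x : ℝ) : ℝ := ∫ y in II, K2 x y

/-- `W(x) = sin²(x/2)·V(x)`. -/
def WW (x : ℝ) : ℝ := Real.sin (x / 2) ^ 2 * VV x

/-- The `2π`-periodic extension of `V^{−1/2}ψ` to `ℝ`. -/
def periodicVinvHalf (ψ : ℝ → ℂ) (x : ℝ) : ℂ :=
  ((VV (mod2pi x) ^ (-(1 : ℝ) / 2) : ℝ) : ℂ) * ψ (mod2pi x)

/-! ### Trigonometry of the collision surface (half-angle variables) -/

def thf (a c : ℝ) : ℝ := Real.arcsin (Real.tan ((c - a) / 2) * Real.cos ((a + c) / 2))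
def bf (a c : ℝ) : ℝ := (c - a) / 2 + thf a c
def ef (a c : ℝ) : ℝ := π + (a - c) / 2 + thf a c

lemma cos_half_bounds {a c : ℝ} (ha : 0 < a) (hac : a < c) (hc : c < π) :
    |Real.cos ((a + c) / 2)| < Real.cos ((c - a) / 2) := by
  have e1 : (a + c) / 2 = c / 2 + a / 2 := by ring
  have e2 : (c - a) / 2 = c / 2 - a / 2 := by ring
  rw [e1, e2, Real.cos_add, Real.cos_sub]
  have h1 : 0 < Real.sin (a / 2) := Real.sin_pos_of_pos_of_lt_pi (by linarith) (by linarith)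
  have h2 : 0 < Real.sin (c / 2) := Real.sin_pos_of_pos_of_lt_pi (by linarith) (by linarith)
  have h3 : 0 < Real.cos (a / 2) := Real.cos_pos_of_mem_Ioo ⟨by linarith, by linarith⟩
  have h4 : 0 < Real.cos (c / 2) := Real.cos_pos_of_mem_Ioo ⟨by linarith, by linarith⟩
  have := mul_pos h2 h1
  have := mul_pos h4 h3
  rw [abs_lt]; constructor <;> linarith

lemma arg_abs_lt {a c : ℝ} (ha : 0 < a) (hac : a < c) (hc : c < π) :
    |Real.tan ((c - a) / 2) * Real.cos ((a + c) / 2)| < Real.sin ((c - a) / 2) := by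
  have hD : 0 < Real.cos ((c - a) / 2) := Real.cos_pos_of_mem_Ioo ⟨by linarith, by linarith⟩
  have hs : 0 < Real.sin ((c - a) / 2) := Real.sin_pos_of_pos_of_lt_pi (by linarith) (by linarith)
  have ht : 0 < Real.tan ((c - a) / 2) := by rw [Real.tan_eq_sin_div_cos]; positivity
  rw [abs_mul, abs_of_pos ht]
  calc _ < Real.tan ((c - a) / 2) * Real.cos ((c - a) / 2) :=
        mul_lt_mul_of_pos_left (cos_half_bounds ha hac hc) ht
    _ = _ := by rw [Real.tan_eq_sin_div_cos]; field_simp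

lemma thf_abs_lt {a c : ℝ} (ha : 0 < a) (hac : a < c) (hc : c < π) :
    |thf a c| < (c - a) / 2 := by
  have h := abs_lt.1 (arg_abs_lt ha hac hc)
  have hs : Real.sin ((c - a) / 2) ≤ 1 := Real.sin_le_one _
  rw [abs_lt]; unfold thf
  constructor
  · rw [Real.lt_arcsin_iff_sin_lt' ⟨by linarith, by linarith⟩, Real.sin_neg]; exact h.1
  · rw [Real.arcsin_lt_iff_lt_sin' ⟨by linarith, by linarith⟩]; exact h.2

lemma sin_thf {a c : ℝ} (ha : 0 < a) (hac : a < c) (hc : c < π) :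
    Real.sin (thf a c) = Real.tan ((c - a) / 2) * Real.cos ((a + c) / 2) := by
  have h := abs_lt.1 (arg_abs_lt ha hac hc)
  have hs : Real.sin ((c - a) / 2) ≤ 1 := Real.sin_le_one _
  exact Real.sin_arcsin (by linarith) (by linarith)

lemma ef_eq (a c : ℝ) : ef a c = π + a + bf a c - c := by unfold ef bf; ring

lemma sum_b (a b c : ℝ) : Real.sin b + Real.sin (a + b - c)
    = 2 * Real.sin (b - (c - a) / 2) * Real.cos ((c - a) / 2) := by
  have e1 : b = (b - (c - a) / 2) + (c - a) / 2 := by ring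
  have e2 : a + b - c = (b - (c - a) / 2) - (c - a) / 2 := by ring
  rw [e2, Real.sin_sub (b - (c - a) / 2)]
  nth_rewrite 1 [e1]
  rw [Real.sin_add (b - (c - a) / 2)]; ring

lemma diff_s (a c : ℝ) : Real.sin c - Real.sin a
    = 2 * Real.sin ((c - a) / 2) * Real.cos ((a + c) / 2) := by
  have e1 : c = (a + c) / 2 + (c - a) / 2 := by ring
  have e2 : a = (a + c) / 2 - (c - a) / 2 := by ring
  nth_rewrite 1 [e1]; nth_rewrite 3 [e2]
  rw [Real.sin_add, Real.sin_sub]; ring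

lemma energy {a c : ℝ} (ha : 0 < a) (hac : a < c) (hc : c < π) :
    Real.sin a + Real.sin (bf a c) = Real.sin c - Real.sin (a + bf a c - c) := by
  have h1 := sum_b a (bf a c) c
  have h2 := diff_s a c
  have hD : 0 < Real.cos ((c - a) / 2) := Real.cos_pos_of_mem_Ioo ⟨by linarith, by linarith⟩
  have e : bf a c - (c - a) / 2 = thf a c := by unfold bf; ring
  rw [e, sin_thf ha hac hc, Real.tan_eq_sin_div_cos] at h1
  have : 2 * (Real.sin ((c - a) / 2) / Real.cos ((c - a) / 2) * Real.cos ((a + c) / 2)) *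
      Real.cos ((c - a) / 2) = 2 * Real.sin ((c - a) / 2) * Real.cos ((a + c) / 2) := by
    field_simp
  linarith

lemma bf_unique {a b c : ℝ} (ha : 0 < a) (hac : a < c) (hc : c < π)
    (hb : |b - (c - a) / 2| < π / 2)
    (h : Real.sin a + Real.sin b = Real.sin c - Real.sin (a + b - c)) : bf a c = b := by
  have h1 := sum_b a b c
  have h2 := diff_s a c
  have hD : 0 < Real.cos ((c - a) / 2) := Real.cos_pos_of_mem_Ioo ⟨by linarith, by linarith⟩
  have h3 : Real.sin (b - (c - a) / 2) = Real.tan ((c - a) / 2) * Real.cos ((a + c) / 2) := by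
    rw [Real.tan_eq_sin_div_cos, div_mul_eq_mul_div, eq_div_iff hD.ne']; linarith
  have hb' := abs_lt.1 hb
  have : thf a c = b - (c - a) / 2 := by
    unfold thf
    rw [← h3, Real.arcsin_sin hb'.1.le hb'.2.le]
  unfold bf; linarith

lemma bf_bounds {a c : ℝ} (ha : 0 < a) (hac : a < c) (hc : c < π) :
    0 < bf a c ∧ bf a c < c - a := by
  have h := abs_lt.1 (thf_abs_lt ha hac hc)
  unfold bf; constructor <;> linarith

lemma ef_bounds {a c : ℝ} (ha : 0 < a) (hac : a < c) (hc : c < π) :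
    a < ef a c ∧ ef a c < π := by
  have h := bf_bounds ha hac hc
  rw [ef_eq]; constructor <;> linarith

lemma sin_ef (a c : ℝ) : Real.sin (ef a c) = - Real.sin (a + bf a c - c) := by
  rw [ef_eq, show π + a + bf a c - c = (a + bf a c - c) + π by ring, Real.sin_add_pi]

lemma cos_ef (a c : ℝ) : Real.cos (ef a c) = - Real.cos (a + bf a c - c) := by
  rw [ef_eq, show π + a + bf a c - c = (a + bf a c - c) + π by ring, Real.cos_add_pi]

lemma energy' {a c : ℝ} (ha : 0 < a) (hac : a < c) (hc : c < π) :
    Real.sin a + Real.sin (bf a c) = Real.sin c + Real.sin (ef a c) := by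
  rw [energy ha hac hc, sin_ef]; ring

lemma bf_invol {a c : ℝ} (ha : 0 < a) (hac : a < c) (hc : c < π) :
    bf a (ef a c) = bf a c := by
  have h := bf_bounds ha hac hc
  have h' := ef_bounds ha hac hc
  have he := ef_eq a c
  apply bf_unique ha h'.1 h'.2
  · rw [abs_lt]; constructor <;> linarith
  · rw [energy' ha hac hc, show a + bf a c - ef a c = c - π by rw [he]; ring, Real.sin_sub_pi]
    ring

lemma ef_invol {a c : ℝ} (ha : 0 < a) (hac : a < c) (hc : c < π) :
    ef a (ef a c) = c := by
  rw [ef_eq a (ef a c), bf_invol ha hac hc, ef_eq a c]; ring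

lemma cosb_sub_cose {a c : ℝ} (ha : 0 < a) (hac : a < c) (hc : c < π) :
    0 < Real.cos (bf a c) - Real.cos (ef a c) := by
  have h := abs_lt.1 (thf_abs_lt ha hac hc)
  have e1 : bf a c = thf a c + (c - a) / 2 := by unfold bf; ring
  have e2 : a + bf a c - c = thf a c - (c - a) / 2 := by unfold bf; ring
  rw [cos_ef, e2, e1, Real.cos_add, Real.cos_sub]
  have h3 : 0 < Real.cos (thf a c) := Real.cos_pos_of_mem_Ioo ⟨by linarith, by linarith⟩
  have hD : 0 < Real.cos ((c - a) / 2) := Real.cos_pos_of_mem_Ioo ⟨by linarith, by linarith⟩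
  have := mul_pos h3 hD
  linarith

lemma bf_hasDeriv {a c : ℝ} (ha : 0 < a) (hac : a < c) (hc : c < π) :
    HasDerivAt (fun c => bf a c) ((Real.cos c - Real.cos (ef a c)) /
      (Real.cos (bf a c) - Real.cos (ef a c))) c := by
  have h := abs_lt.1 (arg_abs_lt ha hac hc)
  have hs : Real.sin ((c - a) / 2) ≤ 1 := Real.sin_le_one _
  have hD : 0 < Real.cos ((c - a) / 2) := Real.cos_pos_of_mem_Ioo ⟨by linarith, by linarith⟩
  have hd : DifferentiableAt ℝ (fun c => bf a c) c := by
    unfold bf thf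
    apply DifferentiableAt.add (by fun_prop)
    have hi : DifferentiableAt ℝ
        (fun c => Real.tan ((c - a) / 2) * Real.cos ((a + c) / 2)) c := by
      apply DifferentiableAt.mul _ (by fun_prop)
      exact DifferentiableAt.comp c (g := Real.tan) (f := fun c => (c - a) / 2)
        (Real.differentiableAt_tan.2 hD.ne') (by fun_prop)
    exact DifferentiableAt.comp c (g := Real.arcsin)
      (f := fun c => Real.tan ((c - a) / 2) * Real.cos ((a + c) / 2))
      ((Real.differentiableAt_arcsin).2 ⟨by linarith, by linarith⟩) hi
  have hb := hd.hasDerivAt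
  set b' := deriv (fun c => bf a c) c with hb'
  have h1 : HasDerivAt (fun c => Real.sin (bf a c) - Real.sin c + Real.sin (a + bf a c - c))
      (Real.cos (bf a c) * b' - Real.cos c + Real.cos (a + bf a c - c) * (b' - 1)) c := by
    have h2 : HasDerivAt (fun c => a + bf a c - c) (b' - 1) c :=
      (hb.const_add a).sub (hasDerivAt_id c)
    exact (hb.sin.sub (Real.hasDerivAt_sin c)).add h2.sin
  have h2 : HasDerivAt (fun c => Real.sin (bf a c) - Real.sin c + Real.sin (a + bf a c - c))
      0 c := by
    apply (hasDerivAt_const c (-Real.sin a)).congr_of_eventuallyEq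
    filter_upwards [Ioo_mem_nhds hac hc] with t ht
    have := energy ha ht.1 ht.2
    linarith
  have h3 := h1.unique h2
  have h4 := cosb_sub_cose ha hac hc
  have h5 : (Real.cos c - Real.cos (ef a c)) / (Real.cos (bf a c) - Real.cos (ef a c)) = b' := by
    rw [div_eq_iff h4.ne', cos_ef]
    linarith
  rw [h5]; exact hb

lemma ef_hasDeriv {a c : ℝ} (ha : 0 < a) (hac : a < c) (hc : c < π) :
    HasDerivAt (fun c => ef a c) ((Real.cos c - Real.cos (bf a c)) /
      (Real.cos (bf a c) - Real.cos (ef a c))) c := by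
  have h1 := ((bf_hasDeriv ha hac hc).const_add (π + a)).sub (hasDerivAt_id c)
  have h4 := cosb_sub_cose ha hac hc
  have h5 : (fun c => ef a c) = (fun x => π + a + bf a x) - id := by
    funext t; simp [ef_eq]
  have h6 : (Real.cos c - Real.cos (bf a c)) / (Real.cos (bf a c) - Real.cos (ef a c))
      = (Real.cos c - Real.cos (ef a c)) / (Real.cos (bf a c) - Real.cos (ef a c)) - 1 := by
    field_simp; ring
  rw [h5, h6]
  exact h1

lemma Fp_id {a c : ℝ} (ha : 0 < a) (hac : a < c) (hc : c < π) :
    (Real.cos a + Real.cos c) ^ 2 + 4 * Real.sin a * Real.sin c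
      = (Real.cos (bf a c) - Real.cos (ef a c)) ^ 2 := by
  have h := energy' ha hac hc
  have h1 : Real.cos (bf a c - ef a c) = - Real.cos (c - a) := by
    rw [ef_eq, show bf a c - (π + a + bf a c - c) = (c - a) - π by ring, Real.cos_sub_pi]
  rw [Real.cos_sub, Real.cos_sub] at h1
  have h2 : Real.sin (bf a c) - Real.sin (ef a c) = Real.sin c - Real.sin a := by linarith
  have h3 : (Real.sin (bf a c) - Real.sin (ef a c)) ^ 2 = (Real.sin c - Real.sin a) ^ 2 := by
    rw [h2]
  nlinarith [Real.sin_sq_add_cos_sq a, Real.sin_sq_add_cos_sq c,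
    Real.sin_sq_add_cos_sq (bf a c), Real.sin_sq_add_cos_sq (ef a c)]

lemma Fm_id {a c : ℝ} (ha : 0 < a) (hac : a < c) (hc : c < π) :
    (Real.cos a + Real.cos (bf a c)) ^ 2 - 4 * Real.sin a * Real.sin (bf a c)
      = (Real.cos c - Real.cos (ef a c)) ^ 2 := by
  have h := energy' ha hac hc
  have h1 : Real.cos (c + ef a c) = - Real.cos (a + bf a c) := by
    rw [ef_eq, show c + (π + a + bf a c - c) = (a + bf a c) + π by ring, Real.cos_add_pi]
  rw [Real.cos_add, Real.cos_add] at h1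
  have h3 : (Real.sin a + Real.sin (bf a c)) ^ 2 = (Real.sin c + Real.sin (ef a c)) ^ 2 := by
    rw [h]
  nlinarith [Real.sin_sq_add_cos_sq a, Real.sin_sq_add_cos_sq c,
    Real.sin_sq_add_cos_sq (bf a c), Real.sin_sq_add_cos_sq (ef a c)]

lemma cosb_sub_cosc {a c : ℝ} (ha : 0 < a) (hac : a < c) (hc : c < π) :
    0 < Real.cos (bf a c) - Real.cos c := by
  have h := bf_bounds ha hac hc
  have := Real.cos_lt_cos_of_nonneg_of_le_pi h.1.le hc.le (show bf a c < c by linarith)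
  linarith

/-- Surjectivity: every `b` with `F₋ > 0` and `a + b < π` is reached from `e < c`. -/
lemma bf_surj {a b : ℝ} (ha : 0 < a) (hb : 0 < b) (hab : a + b < π)
    (hF : 0 < (Real.cos a + Real.cos b) ^ 2 - 4 * Real.sin a * Real.sin b) :
    ∃ c, a < c ∧ c < π ∧ ef a c < c ∧ bf a c = b := by
  have ea : a = (a + b) / 2 + (a - b) / 2 := by ring
  have eb : b = (a + b) / 2 - (a - b) / 2 := by ring
  have hsa : Real.sin a + Real.sin b = 2 * Real.sin ((a + b) / 2) * Real.cos ((a - b) / 2) := by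
    nth_rewrite 1 [ea]; nth_rewrite 3 [eb]
    rw [Real.sin_add, Real.sin_sub]; ring
  have hF2 : (Real.cos a + Real.cos b) ^ 2 - 4 * Real.sin a * Real.sin b
      = 4 * (Real.cos ((a + b) / 2) ^ 2
        - Real.sin ((a + b) / 2) ^ 2 * Real.cos ((a - b) / 2) ^ 2) := by
    have t1 : Real.cos a = Real.cos ((a + b) / 2 + (a - b) / 2) := by rw [← ea]
    have t2 : Real.cos b = Real.cos ((a + b) / 2 - (a - b) / 2) := by rw [← eb]
    have t3 : Real.sin a = Real.sin ((a + b) / 2 + (a - b) / 2) := by rw [← ea]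
    have t4 : Real.sin b = Real.sin ((a + b) / 2 - (a - b) / 2) := by rw [← eb]
    rw [t1, t2, t3, t4, Real.cos_add, Real.cos_sub, Real.sin_add, Real.sin_sub]
    have p1 := Real.sin_sq_add_cos_sq ((a + b) / 2)
    have p2 := Real.sin_sq_add_cos_sq ((a - b) / 2)
    have q1 : Real.sin ((a + b) / 2) ^ 2 = 1 - Real.cos ((a + b) / 2) ^ 2 := by linarith
    have q2 : Real.sin ((a - b) / 2) ^ 2 = 1 - Real.cos ((a - b) / 2) ^ 2 := by linarith
    linear_combination (4 * Real.cos ((a + b) / 2) ^ 2) * q2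
  set s := (a + b) / 2 with hs
  set d := (a - b) / 2 with hd
  have hcs : 0 < Real.cos s := Real.cos_pos_of_mem_Ioo ⟨by linarith, by linarith⟩
  have hss : 0 < Real.sin s := Real.sin_pos_of_pos_of_lt_pi (by linarith) (by linarith)
  have hcd : Real.cos s < Real.cos d := by
    rw [← Real.cos_abs d]
    apply Real.cos_lt_cos_of_nonneg_of_le_pi (abs_nonneg _) (by linarith)
    rw [abs_lt]; constructor <;> linarith
  have hcd0 : 0 < Real.cos d := hcs.trans hcd
  have hlt : Real.tan s * Real.cos d < 1 := by
    rw [Real.tan_eq_sin_div_cos, div_mul_eq_mul_div, div_lt_one hcs]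
    rw [hF2] at hF
    nlinarith [mul_pos hss hcd0]
  have hgt : Real.sin s < Real.tan s * Real.cos d := by
    rw [Real.tan_eq_sin_div_cos, div_mul_eq_mul_div, lt_div_iff₀ hcs]
    exact mul_lt_mul_of_pos_left hcd hss
  set δ := Real.arccos (Real.tan s * Real.cos d) with hδ
  have hδ0 : 0 < δ := Real.arccos_pos.2 hlt
  have hcosδ : Real.cos δ = Real.tan s * Real.cos d := Real.cos_arccos (by linarith) hlt.le
  have hδ1 : δ < π / 2 - s := by
    by_contra hcon
    push Not at hcon
    have : Real.cos δ ≤ Real.cos (π / 2 - s) :=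
      Real.cos_le_cos_of_nonneg_of_le_pi (by linarith) (Real.arccos_le_pi _) hcon
    rw [Real.cos_pi_div_two_sub] at this
    linarith
  have hac : a < s + π / 2 + δ := by linarith
  have hc : s + π / 2 + δ < π := by linarith
  have hbf : bf a (s + π / 2 + δ) = b := by
    apply bf_unique ha hac hc
    · rw [abs_lt]; constructor <;> linarith
    · have e3 : a + b - (s + π / 2 + δ) = (s - δ) - π / 2 := by rw [hs]; ring
      have e4 : s + π / 2 + δ = (s + δ) + π / 2 := by ring
      rw [hsa, e3, Real.sin_sub_pi_div_two, e4, Real.sin_add_pi_div_two, Real.cos_add,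
        Real.cos_sub, hcosδ, Real.tan_eq_sin_div_cos]
      field_simp; ring
  refine ⟨s + π / 2 + δ, hac, hc, ?_, hbf⟩
  rw [ef_eq, hbf]; linarith

lemma ef_anti {a : ℝ} (ha : 0 < a) : StrictAntiOn (fun c => ef a c) (Ioo a π) := by
  apply strictAntiOn_of_deriv_neg (convex_Ioo a π)
  · intro c hc
    exact (ef_hasDeriv ha hc.1 hc.2).continuousAt.continuousWithinAt
  · intro c hc
    rw [interior_Ioo] at hc
    rw [(ef_hasDeriv ha hc.1 hc.2).deriv]
    apply div_neg_of_neg_of_pos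
    · linarith [cosb_sub_cosc ha hc.1 hc.2]
    · exact cosb_sub_cose ha hc.1 hc.2

lemma bf_inj {a : ℝ} (ha : 0 < a) : InjOn (fun c => bf a c) {c | c ∈ Ioo a π ∧ ef a c < c} := by
  intro c hc c' hc' h
  simp only at h
  have h0 := ef_eq a c
  have h0' := ef_eq a c'
  have hm := (ef_anti ha).antitoneOn
  -- energies and momenta agree, so `c + e` agrees and `cos ((c - e)/2)` agrees
  have E := energy' ha hc.1.1 hc.1.2
  have E' := energy' ha hc'.1.1 hc'.1.2
  rw [← h] at E'
  have hsum : c + ef a c = c' + ef a c' := by rw [h0, h0', h]; ring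
  have hs1 : Real.sin c + Real.sin (ef a c)
      = 2 * Real.sin ((c + ef a c) / 2) * Real.cos ((c - ef a c) / 2) := by
    have e1 : c = (c + ef a c) / 2 + (c - ef a c) / 2 := by ring
    have e2 : ef a c = (c + ef a c) / 2 - (c - ef a c) / 2 := by ring
    have t1 : Real.sin c = Real.sin ((c + ef a c) / 2 + (c - ef a c) / 2) := by rw [← e1]
    have t2 : Real.sin (ef a c) = Real.sin ((c + ef a c) / 2 - (c - ef a c) / 2) := by rw [← e2]
    rw [t1, t2, Real.sin_add, Real.sin_sub]; ring
  have hs2 : Real.sin c' + Real.sin (ef a c')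
      = 2 * Real.sin ((c' + ef a c') / 2) * Real.cos ((c' - ef a c') / 2) := by
    have e1 : c' = (c' + ef a c') / 2 + (c' - ef a c') / 2 := by ring
    have e2 : ef a c' = (c' + ef a c') / 2 - (c' - ef a c') / 2 := by ring
    have t1 : Real.sin c' = Real.sin ((c' + ef a c') / 2 + (c' - ef a c') / 2) := by rw [← e1]
    have t2 : Real.sin (ef a c') = Real.sin ((c' + ef a c') / 2 - (c' - ef a c') / 2) := by
      rw [← e2]
    rw [t1, t2, Real.sin_add, Real.sin_sub]; ring
  have b1 := ef_bounds ha hc.1.1 hc.1.2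
  have b2 := ef_bounds ha hc'.1.1 hc'.1.2
  have l1 := hc.1.1; have l2 := hc.1.2; have l3 := hc'.1.1; have l4 := hc'.1.2
  have hS : 0 < Real.sin ((c + ef a c) / 2) :=
    Real.sin_pos_of_pos_of_lt_pi (by linarith) (by linarith)
  have hcos : Real.cos ((c - ef a c) / 2) = Real.cos ((c' - ef a c') / 2) := by
    rw [← hsum] at hs2
    have : 2 * Real.sin ((c + ef a c) / 2) * Real.cos ((c - ef a c) / 2)
      = 2 * Real.sin ((c + ef a c) / 2) * Real.cos ((c' - ef a c') / 2) := by linarith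
    exact mul_left_cancel₀ (by positivity) this
  have k1 := hc.2; have k2 := hc'.2
  have := Real.injOn_cos (⟨by linarith, by linarith⟩ : (c - ef a c) / 2 ∈ Icc 0 π)
    (⟨by linarith, by linarith⟩ : (c' - ef a c') / 2 ∈ Icc 0 π) hcos
  linarith

/-! ### One-dimensional changes of variables -/

lemma mod2pi_add_int (x : ℝ) (n : ℤ) : mod2pi (x + 2 * π * n) = mod2pi x := by
  unfold mod2pi
  have : (x + 2 * π * n) / (2 * π) = x / (2 * π) + n := by field_simp
  rw [this, Int.floor_add_intCast]; push_cast; ring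

lemma mod2pi_of_mem {x : ℝ} (h0 : 0 ≤ x) (h1 : x < 2 * π) : mod2pi x = x := by
  unfold mod2pi
  have : ⌊x / (2 * π)⌋ = 0 := by
    rw [Int.floor_eq_zero_iff]
    exact ⟨by positivity, by rw [div_lt_one (by positivity)]; exact h1⟩
  rw [this]; simp

lemma mod2pi_mem (x : ℝ) : mod2pi x ∈ II := by
  unfold mod2pi II
  have hp : (0:ℝ) < 2 * π := by positivity
  have h1 := Int.floor_le (x / (2 * π))
  have h2 := Int.lt_floor_add_one (x / (2 * π))
  rw [le_div_iff₀ hp] at h1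
  rw [div_lt_iff₀ hp] at h2
  constructor <;> linarith

lemma measurable_mod2pi : Measurable mod2pi := by
  unfold mod2pi
  have : Measurable fun x : ℝ => ((⌊x / (2 * π)⌋ : ℤ) : ℝ) :=
    (measurable_from_top (f := fun n : ℤ => (n : ℝ))).comp
      (Int.measurable_floor.comp (measurable_id.div_const _))
  exact measurable_id.sub (this.const_mul _)

def Yh (x z : ℝ) : ℝ := mod2pi (h0 x z)
def Wh (x z : ℝ) : ℝ := mod2pi (x - z + h0 x z)

lemma measurable_rtan : Measurable Real.tan := by
  have : Real.tan = fun x => Real.sin x / Real.cos x := by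
    funext x; exact Real.tan_eq_sin_div_cos x
  rw [this]; exact Real.measurable_sin.div Real.measurable_cos

lemma measurable_h0 : Measurable (fun p : ℝ × ℝ => h0 p.1 p.2) := by
  unfold h0
  have h1 : Measurable fun p : ℝ × ℝ => Real.tan (|p.2 - p.1| / 4) :=
    measurable_rtan.comp (by fun_prop)
  have h2 : Measurable fun p : ℝ × ℝ => Real.cos ((p.1 + p.2) / 4) := by fun_prop
  have h3 := Real.measurable_arcsin.comp (h1.mul h2)
  have h4 : Measurable fun p : ℝ × ℝ => (p.2 - p.1) / 2 := by fun_prop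
  exact h4.add (h3.const_mul 2)

lemma measurable_Yh : Measurable (fun p : ℝ × ℝ => Yh p.1 p.2) :=
  measurable_mod2pi.comp measurable_h0

lemma measurable_Wh : Measurable (fun p : ℝ × ℝ => Wh p.1 p.2) :=
  measurable_mod2pi.comp ((measurable_fst.sub measurable_snd).add measurable_h0)

lemma h0_up {x z : ℝ} (hxz : x < z) : h0 x z = 2 * bf (x / 2) (z / 2) := by
  unfold h0 bf thf
  rw [abs_of_pos (by linarith)]
  rw [show (z / 2 - x / 2) / 2 = (z - x) / 4 by ring, show (x / 2 + z / 2) / 2 = (x + z) / 4 by ring]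
  ring

lemma Yh_up {x z : ℝ} (hx : 0 < x) (hxz : x < z) (hz : z < 2 * π) :
    Yh x z = 2 * bf (x / 2) (z / 2) := by
  have h := bf_bounds (a := x / 2) (c := z / 2) (by linarith) (by linarith) (by linarith)
  unfold Yh
  rw [h0_up hxz, mod2pi_of_mem (by linarith) (by linarith)]

lemma Wh_up {x z : ℝ} (hx : 0 < x) (hxz : x < z) (hz : z < 2 * π) :
    Wh x z = 2 * ef (x / 2) (z / 2) := by
  have h := ef_bounds (a := x / 2) (c := z / 2) (by linarith) (by linarith) (by linarith)
  unfold Wh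
  rw [h0_up hxz, ← mod2pi_add_int _ 1]
  have : x - z + 2 * bf (x / 2) (z / 2) + 2 * π * ((1 : ℤ) : ℝ) = 2 * ef (x / 2) (z / 2) := by
    rw [ef_eq]; push_cast; ring
  rw [this, mod2pi_of_mem (by linarith) (by linarith)]

lemma h0_refl (x z : ℝ) : h0 (2 * π - x) (2 * π - z) = - h0 x z := by
  unfold h0
  rw [show 2 * π - z - (2 * π - x) = -(z - x) by ring, abs_neg,
    show (2 * π - x + (2 * π - z)) / 4 = π - (x + z) / 4 by ring, Real.cos_pi_sub,
    mul_neg, Real.arcsin_neg]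
  ring

lemma mod2pi_neg {t : ℝ} (h : 0 < mod2pi t) : mod2pi (-t) = 2 * π - mod2pi t := by
  have h2 := (mod2pi_mem t).2
  have : mod2pi (2 * π - mod2pi t) = 2 * π - mod2pi t :=
    mod2pi_of_mem (by linarith) (by linarith)
  rw [← this]
  have e : 2 * π - mod2pi t = -t + 2 * π * ((1 + ⌊t / (2 * π)⌋ : ℤ) : ℝ) := by
    unfold mod2pi; push_cast; ring
  rw [e, mod2pi_add_int]

lemma Yh_up_mem {x z : ℝ} (hx : 0 < x) (hxz : x < z) (hz : z < 2 * π) :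
    0 < Yh x z ∧ Yh x z < 2 * π - x := by
  have h := bf_bounds (a := x / 2) (c := z / 2) (by linarith) (by linarith) (by linarith)
  rw [Yh_up hx hxz hz]; constructor <;> linarith

lemma Wh_up_mem {x z : ℝ} (hx : 0 < x) (hxz : x < z) (hz : z < 2 * π) :
    x < Wh x z ∧ Wh x z < 2 * π := by
  have h := ef_bounds (a := x / 2) (c := z / 2) (by linarith) (by linarith) (by linarith)
  rw [Wh_up hx hxz hz]; constructor <;> linarith

lemma Yh_down {x z : ℝ} (hx : x < 2 * π) (hxz : z < x) (hz : 0 < z) :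
    Yh x z = 2 * π - Yh (2 * π - x) (2 * π - z) := by
  have h := Yh_up_mem (x := 2 * π - x) (z := 2 * π - z) (by linarith) (by linarith) (by linarith)
  unfold Yh at h ⊢
  rw [← mod2pi_neg h.1, h0_refl, neg_neg]

lemma Wh_down {x z : ℝ} (hx : x < 2 * π) (hxz : z < x) (hz : 0 < z) :
    Wh x z = 2 * π - Wh (2 * π - x) (2 * π - z) := by
  have h := Wh_up_mem (x := 2 * π - x) (z := 2 * π - z) (by linarith) (by linarith) (by linarith)
  unfold Wh at h ⊢
  rw [← mod2pi_neg (by linarith), h0_refl]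
  congr 1; ring

lemma Wh_invol_up {x z : ℝ} (hx : 0 < x) (hxz : x < z) (hz : z < 2 * π) :
    Wh x (Wh x z) = z := by
  have h := Wh_up_mem hx hxz hz
  rw [Wh_up hx h.1 h.2, Wh_up hx hxz hz, mul_div_cancel_left₀ _ two_ne_zero,
    ef_invol (by linarith) (by linarith) (by linarith)]; ring

lemma Yh_Wh_up {x z : ℝ} (hx : 0 < x) (hxz : x < z) (hz : z < 2 * π) :
    Yh x (Wh x z) = Yh x z := by
  have h := Wh_up_mem hx hxz hz
  rw [Yh_up hx h.1 h.2, Wh_up hx hxz hz, Yh_up hx hxz hz, mul_div_cancel_left₀ _ two_ne_zero,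
    bf_invol (by linarith) (by linarith) (by linarith)]

lemma Wh_down_mem {x z : ℝ} (hx : x < 2 * π) (hxz : z < x) (hz : 0 < z) :
    0 < Wh x z ∧ Wh x z < x := by
  have h := Wh_up_mem (x := 2 * π - x) (z := 2 * π - z) (by linarith) (by linarith) (by linarith)
  rw [Wh_down hx hxz hz]; constructor <;> linarith

lemma Wh_invol {x z : ℝ} (hx0 : 0 < x) (hx : x < 2 * π) (hz0 : 0 < z) (hz : z < 2 * π)
    (hxz : x ≠ z) : Wh x (Wh x z) = z := by
  rcases lt_or_gt_of_ne hxz with h | h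
  · exact Wh_invol_up hx0 h hz
  · have hm := Wh_down_mem hx h hz0
    rw [Wh_down hx hm.2 hm.1, Wh_down hx h hz0, sub_sub_cancel,
      Wh_invol_up (by linarith) (by linarith) (by linarith), sub_sub_cancel]

lemma Yh_Wh {x z : ℝ} (hx0 : 0 < x) (hx : x < 2 * π) (hz0 : 0 < z) (hz : z < 2 * π)
    (hxz : x ≠ z) : Yh x (Wh x z) = Yh x z := by
  rcases lt_or_gt_of_ne hxz with h | h
  · exact Yh_Wh_up hx0 h hz
  · have hm := Wh_down_mem hx h hz0
    rw [Yh_down hx hm.2 hm.1, Wh_down hx h hz0, sub_sub_cancel,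
      Yh_Wh_up (by linarith) (by linarith) (by linarith), Yh_down hx h hz0]

/-- swapping `x` and `z` swaps `y` and `w` -/
lemma Yh_swap (x z : ℝ) : Yh z x = Wh x z := by
  unfold Yh Wh h0
  rw [abs_sub_comm x z, add_comm z x]; congr 1; ring

lemma K2_symm (x y : ℝ) : K2 x y = K2 y x := by
  unfold K2 Fp
  rw [show (Real.cos (x / 2) + Real.cos (y / 2)) ^ 2 + 4 * Real.sin (x / 2) * Real.sin (y / 2)
    = (Real.cos (y / 2) + Real.cos (x / 2)) ^ 2 + 4 * Real.sin (y / 2) * Real.sin (x / 2) by ring]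

lemma Fm_symm (x y : ℝ) : Fm x y = Fm y x := by unfold Fm; ring

lemma K1_symm (x y : ℝ) : K1 x y = K1 y x := by unfold K1; rw [Fm_symm]

lemma sincos_refl (x : ℝ) : Real.cos ((2 * π - x) / 2) = - Real.cos (x / 2) ∧
    Real.sin ((2 * π - x) / 2) = Real.sin (x / 2) := by
  rw [show (2 * π - x) / 2 = π - x / 2 by ring, Real.cos_pi_sub, Real.sin_pi_sub]; simp

lemma K2_refl (x y : ℝ) : K2 (2 * π - x) (2 * π - y) = K2 x y := by
  unfold K2 Fp
  rw [(sincos_refl x).1, (sincos_refl x).2, (sincos_refl y).1, (sincos_refl y).2]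
  congr 2; ring

lemma Fm_refl (x y : ℝ) : Fm (2 * π - x) (2 * π - y) = Fm x y := by
  unfold Fm
  rw [(sincos_refl x).1, (sincos_refl x).2, (sincos_refl y).1, (sincos_refl y).2]
  ring

lemma K1_refl (x y : ℝ) : K1 (2 * π - x) (2 * π - y) = K1 x y := by
  unfold K1; rw [Fm_refl]

lemma K1_nonneg (x y : ℝ) : 0 ≤ K1 x y := by unfold K1; split_ifs <;> positivity
lemma K2_nonneg (x y : ℝ) : 0 ≤ K2 x y := by unfold K2; positivity

lemma measurable_Fm : Measurable (fun p : ℝ × ℝ => Fm p.1 p.2) := by unfold Fm; fun_prop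
lemma measurable_Fp : Measurable (fun p : ℝ × ℝ => Fp p.1 p.2) := by unfold Fp; fun_prop
lemma measurable_K2 : Measurable (fun p : ℝ × ℝ => K2 p.1 p.2) := by
  unfold K2; exact measurable_const.div (Real.continuous_sqrt.measurable.comp measurable_Fp)
lemma measurable_K1 : Measurable (fun p : ℝ × ℝ => K1 p.1 p.2) := by
  unfold K1
  exact Measurable.ite (measurableSet_lt measurable_const measurable_Fm)
    (measurable_const.div (Real.continuous_sqrt.measurable.comp measurable_Fm)) measurable_const

lemma K2_up {x z : ℝ} (hx : 0 < x) (hxz : x < z) (hz : z < 2 * π) :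
    K2 x z = 2 / (Real.cos (bf (x / 2) (z / 2)) - Real.cos (ef (x / 2) (z / 2))) := by
  unfold K2 Fp
  rw [Fp_id (by linarith) (by linarith) (by linarith), Real.sqrt_sq]
  exact (cosb_sub_cose (by linarith) (by linarith) (by linarith)).le

lemma K2_Wh_up {x z : ℝ} (hx : 0 < x) (hxz : x < z) (hz : z < 2 * π) :
    K2 x (Wh x z) = 2 / (Real.cos (bf (x / 2) (z / 2)) - Real.cos (z / 2)) := by
  have h := Wh_up_mem hx hxz hz
  rw [K2_up hx h.1 h.2, Wh_up hx hxz hz, mul_div_cancel_left₀ _ two_ne_zero,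
    bf_invol (by linarith) (by linarith) (by linarith),
    ef_invol (by linarith) (by linarith) (by linarith)]

lemma ae_II (f : ℝ → ℝ≥0∞) {x : ℝ} (hx0 : 0 < x) (hx : x < 2 * π) :
    ∫⁻ z in II, f z = (∫⁻ z in Ioo x (2 * π), f z) + ∫⁻ z in Ioo 0 x, f z := by
  have h1 : II = Ico x (2 * π) ∪ Ico 0 x := by
    unfold II; rw [union_comm, Ico_union_Ico_eq_Ico hx0.le hx.le]
  rw [h1, lintegral_union measurableSet_Ico]
  · rw [setLIntegral_congr Ioo_ae_eq_Ico.symm, setLIntegral_congr Ioo_ae_eq_Ico.symm]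
  · rw [Set.disjoint_left]; intro t ht ht'; exact absurd ht'.2 (not_lt.2 ht.1)

lemma refl_lint (a b : ℝ) (F : ℝ → ℝ≥0∞) :
    ∫⁻ z in Ioo a b, F z = ∫⁻ z in Ioo (2 * π - b) (2 * π - a), F (2 * π - z) := by
  have h := lintegral_image_eq_lintegral_abs_deriv_mul (s := Ioo (2 * π - b) (2 * π - a))
    (f := fun z => 2 * π - z) (f' := fun _ => -1) measurableSet_Ioo
    (fun z _ => ((hasDerivAt_id z).const_sub (2 * π)).hasDerivWithinAt)
    (fun x _ y _ h => by simpa using h) F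
  rw [Set.image_const_sub_Ioo] at h
  simpa using h

lemma hA_up {x : ℝ} (hx0 : 0 < x) (Φ : ℝ → ℝ≥0∞) :
    ∫⁻ z in Ioo x (2 * π), ENNReal.ofReal (K2 x z) * Φ (Wh x z)
      = ∫⁻ z in Ioo x (2 * π), ENNReal.ofReal (K2 x z) * Φ z := by
  have himg : (fun z => Wh x z) '' Ioo x (2 * π) = Ioo x (2 * π) := by
    apply Subset.antisymm
    · rintro _ ⟨z, hz, rfl⟩
      exact Wh_up_mem hx0 hz.1 hz.2
    · intro z hz
      exact ⟨Wh x z, Wh_up_mem hx0 hz.1 hz.2, Wh_invol_up hx0 hz.1 hz.2⟩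
  have hinj : InjOn (fun z => Wh x z) (Ioo x (2 * π)) := by
    intro z hz z' hz' h
    simp only at h
    rw [← Wh_invol_up hx0 hz.1 hz.2, h, Wh_invol_up hx0 hz'.1 hz'.2]
  have hder : ∀ z ∈ Ioo x (2 * π), HasDerivWithinAt (fun z => Wh x z)
      ((Real.cos (z / 2) - Real.cos (bf (x / 2) (z / 2))) /
      (Real.cos (bf (x / 2) (z / 2)) - Real.cos (ef (x / 2) (z / 2)))) (Ioo x (2 * π)) z := by
    intro z hz
    have h1 := ef_hasDeriv (a := x / 2) (c := z / 2) (by linarith) (by linarith [hz.1])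
      (by linarith [hz.2])
    have h2 : HasDerivAt (fun z : ℝ => z / 2) (1 / 2) z := (hasDerivAt_id z).div_const 2
    have h3 := ((HasDerivAt.comp z h1 h2).const_mul 2).hasDerivWithinAt (s := Ioo x (2 * π))
    have h4 := h3.congr (f₁ := fun z => Wh x z) (fun t ht => Wh_up hx0 ht.1 ht.2)
      (Wh_up hx0 hz.1 hz.2)
    exact h4.congr_deriv (by ring)
  have h := lintegral_image_eq_lintegral_abs_deriv_mul measurableSet_Ioo hder hinj
    (fun t => ENNReal.ofReal (K2 x t) * Φ t)
  rw [himg] at h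
  rw [h]
  apply setLIntegral_congr_fun measurableSet_Ioo
  intro z hz
  simp only
  rw [← mul_assoc, ← ENNReal.ofReal_mul (abs_nonneg _), K2_Wh_up hx0 hz.1 hz.2,
    K2_up hx0 hz.1 hz.2]
  have p1 := cosb_sub_cose (a := x / 2) (c := z / 2) (by linarith) (by linarith [hz.1])
      (by linarith [hz.2])
  have p2 := cosb_sub_cosc (a := x / 2) (c := z / 2) (by linarith) (by linarith [hz.1])
      (by linarith [hz.2])
  congr 2
  rw [abs_div, abs_of_pos p1, abs_sub_comm, abs_of_pos p2]
  field_simp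

def upS (x : ℝ) : Set ℝ := Ioo x (2 * π)
def upA (x : ℝ) : Set ℝ := {z | Wh x z < z}
def upA' (x : ℝ) : Set ℝ := {z | z < Wh x z}
lemma upAm (x : ℝ) : MeasurableSet (upA x) :=
  measurableSet_lt (measurable_Wh.comp measurable_prodMk_left) measurable_id
lemma upAm' (x : ℝ) : MeasurableSet (upA' x) :=
  measurableSet_lt measurable_id (measurable_Wh.comp measurable_prodMk_left)

lemma hB_split {x : ℝ} (hx0 : 0 < x) (Φ : ℝ → ℝ≥0∞) : ∫⁻ z in upS x, ENNReal.ofReal (K2 x z) * Φ (Yh x z)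
      = (∫⁻ z in upS x ∩ upA x, ENNReal.ofReal (K2 x z) * Φ (Yh x z))
        + ∫⁻ z in upS x ∩ upA' x, ENNReal.ofReal (K2 x z) * Φ (Yh x z) := by
    rw [← lintegral_inter_add_sdiff _ (upS x) (upAm x)]
    congr 1
    apply setLIntegral_congr
    have hsub : (upS x ∩ {z | Wh x z = z}).Subsingleton := by
      intro z hz z' hz'
      have a1 := hz.1.1; have a2 := hz.1.2; have a3 := hz'.1.1; have a4 := hz'.1.2
      have e1 : Wh x z = z := hz.2
      have e2 : Wh x z' = z' := hz'.2
      rw [Wh_up hx0 hz.1.1 hz.1.2] at e1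
      rw [Wh_up hx0 hz'.1.1 hz'.1.2] at e2
      have hanti := ef_anti (a := x / 2) (by linarith)
      have m1 : z / 2 ∈ Ioo (x / 2) π := ⟨by linarith, by linarith⟩
      have m2 : z' / 2 ∈ Ioo (x / 2) π := ⟨by linarith, by linarith⟩
      rcases lt_trichotomy z z' with h | h | h
      · have := hanti m1 m2 (by linarith); simp only at this; linarith
      · exact h
      · have := hanti m2 m1 (by linarith); simp only at this; linarith
    have hnull : volume (upS x ∩ {z | Wh x z = z}) = 0 := hsub.measure_zero _
    have : upS x \ upA x = (upS x ∩ upA' x) ∪ (upS x ∩ {z | Wh x z = z}) := by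
      ext z
      simp only [upA, upA', Set.mem_sdiff, mem_ofPred_eq, not_lt, mem_union, mem_inter_iff]
      constructor
      · rintro ⟨h1, h2⟩
        rcases h2.lt_or_eq with h | h
        · exact Or.inl ⟨h1, h⟩
        · exact Or.inr ⟨h1, h.symm⟩
      · rintro (⟨h1, h2⟩ | ⟨h1, h2⟩)
        · exact ⟨h1, h2.le⟩
        · exact ⟨h1, h2.ge⟩
    rw [this]
    exact union_ae_eq_left_of_ae_eq_empty (ae_eq_empty.2 hnull)

lemma hB_sw {x : ℝ} (hx0 : 0 < x) (Φ : ℝ → ℝ≥0∞) : ∫⁻ z in upS x ∩ upA' x, ENNReal.ofReal (K2 x z) * Φ (Yh x z)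
      = ∫⁻ z in upS x ∩ upA x, ENNReal.ofReal (K2 x z) * Φ (Yh x z) := by
    have h1 := hA_up hx0 ((upA x).indicator (fun z => Φ (Yh x z)))
    change _ = ∫⁻ z in upS x, _ at h1
    rw [inter_comm (upS x) (upA x), inter_comm (upS x) (upA' x), ← Measure.restrict_restrict (upAm x),
      ← Measure.restrict_restrict (upAm' x), ← lintegral_indicator (upAm x), ← lintegral_indicator (upAm' x)]
    have e2 : ∀ z, ENNReal.ofReal (K2 x z) * (upA x).indicator (fun z => Φ (Yh x z)) z
      = (upA x).indicator (fun z => ENNReal.ofReal (K2 x z) * Φ (Yh x z)) z := by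
      intro z; by_cases hz : z ∈ upA x <;> simp [hz]
    simp_rw [e2] at h1
    rw [← h1]
    apply setLIntegral_congr_fun measurableSet_Ioo
    intro z hz
    have i1 := Wh_invol_up hx0 hz.1 hz.2
    have i2 := Yh_Wh_up hx0 hz.1 hz.2
    by_cases hz' : z ∈ upA' x
    · have hz2 : Wh x z ∈ upA x := by simp only [upA, mem_ofPred_eq, i1]; exact hz'
      simp only [indicator_of_mem hz', indicator_of_mem hz2, i2]
    · have hz2 : Wh x z ∉ upA x := by
        simp only [upA, mem_ofPred_eq, i1]; exact hz'
      simp only [indicator_of_notMem hz', indicator_of_notMem hz2, mul_zero]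

lemma hB_img {x : ℝ} (hx0 : 0 < x) : (fun z => Yh x z) '' (upS x ∩ upA x) = Ioo 0 (2 * π - x) ∩ {y | 0 < Fm x y} := by
    apply Subset.antisymm
    · rintro _ ⟨z, ⟨hz, hzA⟩, rfl⟩
      refine ⟨Yh_up_mem hx0 hz.1 hz.2, ?_⟩
      have a1 := hz.1; have a2 := hz.2
      simp only [mem_ofPred_eq, Yh_up hx0 hz.1 hz.2]
      unfold Fm
      rw [mul_div_cancel_left₀ _ two_ne_zero, Fm_id (by linarith) (by linarith) (by linarith)]
      have e1 : Wh x z < z := hzA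
      rw [Wh_up hx0 hz.1 hz.2] at e1
      have eb := ef_bounds (a := x / 2) (c := z / 2) (by linarith) (by linarith) (by linarith)
      have := Real.cos_lt_cos_of_nonneg_of_le_pi (x := ef (x / 2) (z / 2)) (y := z / 2)
        (by linarith) (by linarith) (by linarith)
      have : Real.cos (z / 2) - Real.cos (ef (x / 2) (z / 2)) ≠ 0 := by linarith
      positivity
    · rintro y ⟨hy, hF⟩
      have a1 := hy.1; have a2 := hy.2
      obtain ⟨c, h1, h2, h3, h4⟩ := bf_surj (a := x / 2) (b := y / 2) (by linarith)
        (by linarith) (by linarith) hF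
      have m1 : x < 2 * c := by linarith
      have m2 : 2 * c < 2 * π := by linarith
      refine ⟨2 * c, ⟨⟨m1, m2⟩, ?_⟩, ?_⟩
      · simp only [upA, mem_ofPred_eq]
        rw [Wh_up hx0 m1 m2, mul_div_cancel_left₀ _ two_ne_zero]; linarith
      · simp only
        rw [Yh_up hx0 m1 m2, mul_div_cancel_left₀ _ two_ne_zero, h4]; ring

lemma hB_inj {x : ℝ} (hx0 : 0 < x) : InjOn (fun z => Yh x z) (upS x ∩ upA x) := by
    intro z hz z' hz' h
    simp only at h
    have a1 := hz.1.1; have a2 := hz.1.2; have a3 := hz'.1.1; have a4 := hz'.1.2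
    have e1 : Wh x z < z := hz.2
    have e2 : Wh x z' < z' := hz'.2
    rw [Wh_up hx0 a1 a2] at e1
    rw [Wh_up hx0 a3 a4] at e2
    rw [Yh_up hx0 a1 a2, Yh_up hx0 a3 a4] at h
    have := bf_inj (a := x / 2) (by linarith)
      (show z / 2 ∈ _ from ⟨⟨by linarith, by linarith⟩, by linarith⟩)
      (show z' / 2 ∈ _ from ⟨⟨by linarith, by linarith⟩, by linarith⟩)
      (by simp only; linarith)
    linarith

lemma hB_der {x : ℝ} (hx0 : 0 < x) : ∀ z ∈ upS x ∩ upA x, HasDerivWithinAt (fun z => Yh x z)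
      ((Real.cos (z / 2) - Real.cos (ef (x / 2) (z / 2))) /
      (Real.cos (bf (x / 2) (z / 2)) - Real.cos (ef (x / 2) (z / 2)))) (upS x ∩ upA x) z := by
    rintro z ⟨hz, hzA⟩
    have h1 := bf_hasDeriv (a := x / 2) (c := z / 2) (by linarith) (by linarith [hz.1])
      (by linarith [hz.2])
    have h2 : HasDerivAt (fun z : ℝ => z / 2) (1 / 2) z := (hasDerivAt_id z).div_const 2
    have h3 := ((HasDerivAt.comp z h1 h2).const_mul 2).hasDerivWithinAt (s := upS x ∩ upA x)
    have h4 := h3.congr (f₁ := fun z => Yh x z) (fun t ht => Yh_up hx0 ht.1.1 ht.1.2)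
      (Yh_up hx0 hz.1 hz.2)
    exact h4.congr_deriv (by ring)

lemma hB_up {x : ℝ} (hx0 : 0 < x) (Φ : ℝ → ℝ≥0∞) :
    ∫⁻ z in Ioo x (2 * π), ENNReal.ofReal (K2 x z) * Φ (Yh x z)
      = ∫⁻ y in Ioo 0 (2 * π - x), ENNReal.ofReal (K1 x y) * Φ y := by
  change ∫⁻ z in upS x, _ = _
  have h := lintegral_image_eq_lintegral_abs_deriv_mul (s := upS x ∩ upA x)
    (MeasurableSet.inter measurableSet_Ioo (upAm x)) (hB_der hx0) (hB_inj hx0)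
    (fun t => ENNReal.ofReal (K1 x t) * Φ t)
  rw [hB_img hx0] at h
  have hFm : MeasurableSet {y | 0 < Fm x y} :=
    measurableSet_lt measurable_const (by unfold Fm; fun_prop)
  have hR : ∫⁻ y in Ioo 0 (2 * π - x), ENNReal.ofReal (K1 x y) * Φ y
      = ∫⁻ y in Ioo 0 (2 * π - x) ∩ {y | 0 < Fm x y}, ENNReal.ofReal (K1 x y) * Φ y := by
    rw [inter_comm, ← Measure.restrict_restrict hFm, ← lintegral_indicator hFm]
    apply lintegral_congr
    intro y
    by_cases hy : y ∈ {y | 0 < Fm x y}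
    · rw [indicator_of_mem hy]
    · rw [indicator_of_notMem hy]
      have : K1 x y = 0 := by unfold K1; exact if_neg hy
      simp [this]
  rw [hB_split hx0, hB_sw hx0, hR, h, ← two_mul, ← lintegral_const_mul' _ _ (by simp)]
  apply setLIntegral_congr_fun (MeasurableSet.inter measurableSet_Ioo (upAm x))
  rintro z ⟨hz, hzA⟩
  simp only
  have a1 := hz.1; have a2 := hz.2
  have hmem : Yh x z ∈ Ioo 0 (2 * π - x) ∩ {y | 0 < Fm x y} := by
    rw [← hB_img hx0]; exact ⟨z, ⟨hz, hzA⟩, rfl⟩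
  have e1 : Wh x z < z := hzA
  rw [Wh_up hx0 hz.1 hz.2] at e1
  have eb := ef_bounds (a := x / 2) (c := z / 2) (by linarith) (by linarith) (by linarith)
  have hlt := Real.cos_lt_cos_of_nonneg_of_le_pi (x := ef (x / 2) (z / 2)) (y := z / 2)
        (by linarith) (by linarith) (by linarith)
  have hK1 : K1 x (Yh x z) = 4 / (Real.cos (ef (x / 2) (z / 2)) - Real.cos (z / 2)) := by
    have hpos : 0 < Fm x (Yh x z) := hmem.2
    unfold K1
    rw [if_pos hpos]
    unfold Fm
    rw [Yh_up hx0 a1 a2, mul_div_cancel_left₀ _ two_ne_zero,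
      Fm_id (by linarith) (by linarith) (by linarith), Real.sqrt_sq_eq_abs, abs_sub_comm,
      abs_of_pos (by linarith)]
  have p1 := cosb_sub_cose (a := x / 2) (c := z / 2) (by linarith) (by linarith)
      (by linarith)
  rw [← mul_assoc, ← mul_assoc, ← ENNReal.ofReal_mul (abs_nonneg _), hK1,
    K2_up hx0 hz.1 hz.2, show (2 : ℝ≥0∞) = ENNReal.ofReal 2 by simp,
    ← ENNReal.ofReal_mul (by norm_num)]
  congr 2
  have p2 : 0 < Real.cos (ef (x / 2) (z / 2)) - Real.cos (z / 2) := by linarith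
  rw [abs_div, abs_of_pos p1, abs_sub_comm, abs_of_pos p2]
  field_simp
  norm_num

lemma hA_all {x : ℝ} (hx0 : 0 < x) (hx : x < 2 * π) (Φ : ℝ → ℝ≥0∞) :
    ∫⁻ z in II, ENNReal.ofReal (K2 x z) * Φ (Wh x z)
      = ∫⁻ z in II, ENNReal.ofReal (K2 x z) * Φ z := by
  rw [ae_II _ hx0 hx, ae_II _ hx0 hx, hA_up hx0]
  congr 1
  rw [refl_lint, refl_lint 0 x, sub_zero]
  have := hA_up (x := 2 * π - x) (by linarith) (fun z => Φ (2 * π - z))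
  simp_rw [← K2_refl x, sub_sub_cancel]
  rw [← this]
  apply setLIntegral_congr_fun measurableSet_Ioo
  intro z hz
  simp only
  rw [Wh_down hx (by linarith [hz.1]) (by linarith [hz.2]), sub_sub_cancel]

lemma hB_all {x : ℝ} (hx0 : 0 < x) (hx : x < 2 * π) (Φ : ℝ → ℝ≥0∞) :
    ∫⁻ z in II, ENNReal.ofReal (K2 x z) * Φ (Yh x z)
      = ∫⁻ y in II, ENNReal.ofReal (K1 x y) * Φ y := by
  rw [ae_II _ hx0 hx, hB_up hx0, ae_II (x := 2 * π - x) _ (by linarith) (by linarith), add_comm]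
  congr 1
  rw [refl_lint 0 x, refl_lint (2 * π - x) (2 * π) (fun y => ENNReal.ofReal (K1 x y) * Φ y),
    sub_zero, sub_self, sub_sub_cancel]
  have := hB_up (x := 2 * π - x) (by linarith) (fun z => Φ (2 * π - z))
  simp_rw [← K2_refl x, ← K1_refl x, sub_sub_cancel]
  rw [sub_sub_cancel] at this
  rw [← this]
  apply setLIntegral_congr_fun measurableSet_Ioo
  intro z hz
  simp only
  rw [Yh_down hx (by linarith [hz.1]) (by linarith [hz.2]), sub_sub_cancel]

/-! ### Estimates -/

lemma sinh_pos {x : ℝ} (hx0 : 0 < x) (hx : x < 2 * π) : 0 < Real.sin (x / 2) :=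
  Real.sin_pos_of_pos_of_lt_pi (by linarith) (by linarith)

lemma lint_sin_rpow {s : ℝ} (hs0 : 0 < s) (hs : s < 1) :
    ∫⁻ y in II, ENNReal.ofReal (Real.sin (y / 2) ^ (-s)) < ∞ := by
  have hpi := Real.pi_pos
  have key : ∫⁻ y in Ioo 0 π, ENNReal.ofReal (Real.sin (y / 2) ^ (-s)) < ∞ := by
    have h1 : IntervalIntegrable (fun y : ℝ => y ^ (-s)) volume 0 π :=
      intervalIntegral.intervalIntegrable_rpow' (by linarith)
    rw [intervalIntegrable_iff_integrableOn_Ioo_of_le hpi.le] at h1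
    have h2 : IntegrableOn (fun y : ℝ => π ^ s * y ^ (-s)) (Ioo 0 π) := h1.const_mul _
    have h3 := h2.2
    rw [hasFiniteIntegral_iff_norm] at h3
    refine lt_of_le_of_lt ?_ h3
    apply setLIntegral_mono' measurableSet_Ioo
    intro y hy
    apply ENNReal.ofReal_le_ofReal
    refine le_trans ?_ (le_abs_self _)
    have h4 := Real.mul_le_sin (x := y / 2) (by linarith [hy.1]) (by linarith [hy.2])
    have h5 : y / π ≤ Real.sin (y / 2) := by
      refine le_trans (le_of_eq ?_) h4; field_simp
    have h6 : 0 < y / π := div_pos hy.1 hpi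
    calc Real.sin (y / 2) ^ (-s) ≤ (y / π) ^ (-s) :=
          Real.rpow_le_rpow_of_nonpos h6 h5 (by linarith)
      _ = π ^ s * y ^ (-s) := by
          rw [Real.div_rpow hy.1.le hpi.le, Real.rpow_neg hpi.le, div_inv_eq_mul, mul_comm]
  rw [ae_II _ hpi (by linarith)]
  refine ENNReal.add_lt_top.2 ⟨?_, key⟩
  rw [refl_lint, sub_self, show 2 * π - π = π by ring]
  simp_rw [(sincos_refl _).2]
  exact key

lemma Fp_ge {x y : ℝ} : 4 * Real.sin (x / 2) * Real.sin (y / 2) ≤ Fp x y := by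
  unfold Fp; nlinarith [sq_nonneg (Real.cos (x / 2) + Real.cos (y / 2))]

lemma Fp_pos {x y : ℝ} (hx0 : 0 < x) (hx : x < 2 * π) (hy0 : 0 < y) (hy : y < 2 * π) :
    0 < Fp x y := by
  have h1 := sinh_pos hx0 hx
  have h2 := sinh_pos hy0 hy
  exact lt_of_lt_of_le (by positivity) Fp_ge

lemma K2_pos {x y : ℝ} (hx0 : 0 < x) (hx : x < 2 * π) (hy0 : 0 < y) (hy : y < 2 * π) :
    0 < K2 x y := by
  have := Fp_pos hx0 hx hy0 hy
  unfold K2; positivity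

lemma K2_le {x y : ℝ} (hx0 : 0 < x) (hx : x < 2 * π) (hy0 : 0 < y) (hy : y < 2 * π) :
    K2 x y ≤ Real.sin (x / 2) ^ (-(1/2) : ℝ) * Real.sin (y / 2) ^ (-(1/2) : ℝ) := by
  have h1 := sinh_pos hx0 hx
  have h2 := sinh_pos hy0 hy
  rw [← Real.mul_rpow h1.le h2.le, Real.rpow_neg (by positivity), ← Real.sqrt_eq_rpow]
  unfold K2
  have h3 : Real.sqrt (4 * (Real.sin (x / 2) * Real.sin (y / 2))) ≤ Real.sqrt (Fp x y) :=
    Real.sqrt_le_sqrt (by linarith [Fp_ge (x := x) (y := y)])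
  rw [Real.sqrt_mul (by norm_num), show (4:ℝ) = 2 ^ 2 by norm_num,
    Real.sqrt_sq (by norm_num)] at h3
  have h4 : 0 < Real.sqrt (Real.sin (x / 2) * Real.sin (y / 2)) := by positivity
  calc 2 / Real.sqrt (Fp x y) ≤ 2 / (2 * Real.sqrt (Real.sin (x / 2) * Real.sin (y / 2))) :=
        div_le_div_of_nonneg_left (by norm_num) (by positivity) h3
    _ = _ := by field_simp

lemma ae_II_Ioo : ∀ᵐ x ∂muI, 0 < x ∧ x < 2 * π := by
  have h1 : ∀ᵐ x ∂muI, x ∈ II := ae_restrict_mem measurableSet_Ico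
  have h2 : ∀ᵐ x ∂muI, x ≠ 0 := by
    have : ∀ᵐ x : ℝ, x ≠ 0 := by simp [ae_iff]
    exact ae_restrict_of_ae this
  filter_upwards [h1, h2] with x h1 h2
  exact ⟨lt_of_le_of_ne h1.1 (Ne.symm h2), h1.2⟩

/-- the constant `∫ sin(y/2)^(-1/2)` -/
def S12 : ℝ := (∫⁻ y in II, ENNReal.ofReal (Real.sin (y / 2) ^ (-(1/2) : ℝ))).toReal

lemma lint_K2_le {x : ℝ} (hx0 : 0 < x) (hx : x < 2 * π) :
    ∫⁻ y in II, ENNReal.ofReal (K2 x y) ≤ ENNReal.ofReal (Real.sin (x / 2) ^ (-(1/2) : ℝ) * S12) := by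
  have h1 := sinh_pos hx0 hx
  have hfin := lint_sin_rpow (s := 1 / 2) (by norm_num) (by norm_num)
  rw [ENNReal.ofReal_mul (by positivity)]
  unfold S12
  rw [ENNReal.ofReal_toReal hfin.ne, ← lintegral_const_mul' _ _ ENNReal.ofReal_ne_top]
  apply lintegral_mono_ae
  filter_upwards [ae_II_Ioo] with y hy
  rw [← ENNReal.ofReal_mul (by positivity)]
  exact ENNReal.ofReal_le_ofReal (K2_le hx0 hx hy.1 hy.2)

lemma measurable_K2_right (x : ℝ) : Measurable (fun y => K2 x y) := by
  unfold K2 Fp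
  exact measurable_const.div (Real.continuous_sqrt.measurable.comp (by fun_prop))

lemma measurable_K1_right (x : ℝ) : Measurable (fun y => K1 x y) := by
  have h : Measurable (fun y => Fm x y) := by unfold Fm; fun_prop
  unfold K1
  exact Measurable.ite (measurableSet_lt measurable_const h)
    (measurable_const.div (Real.continuous_sqrt.measurable.comp h)) measurable_const

lemma lint_K2 {x : ℝ} (hx0 : 0 < x) (hx : x < 2 * π) :
    ∫⁻ y in II, ENNReal.ofReal (K2 x y) = ENNReal.ofReal (VV x) := by
  unfold VV
  rw [ofReal_integral_eq_lintegral_ofReal]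
  · refine ⟨(measurable_K2_right x).aestronglyMeasurable, ?_⟩
    rw [hasFiniteIntegral_iff_norm]
    simp_rw [Real.norm_of_nonneg (K2_nonneg x _)]
    exact (lint_K2_le hx0 hx).trans_lt ENNReal.ofReal_lt_top
  · exact Eventually.of_forall (K2_nonneg x)

lemma VV_nonneg (x : ℝ) : 0 ≤ VV x := integral_nonneg (K2_nonneg x)

lemma VV_le {x : ℝ} (hx0 : 0 < x) (hx : x < 2 * π) :
    VV x ≤ Real.sin (x / 2) ^ (-(1/2) : ℝ) * S12 := by
  have h := lint_K2_le hx0 hx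
  rw [lint_K2 hx0 hx] at h
  have h1 := sinh_pos hx0 hx
  exact (ENNReal.ofReal_le_ofReal_iff (mul_nonneg (by positivity) ENNReal.toReal_nonneg)).1 h

lemma measurePreserving_refl : MeasurePreserving (fun x : ℝ => 2 * π - x) muI muI := by
  have h0 : MeasurePreserving (fun x : ℝ => 2 * π - x) volume volume :=
    Measure.measurePreserving_sub_left volume (2 * π)
  have h1 := h0.restrict_preimage (s := Ioo 0 (2 * π)) measurableSet_Ioo
  have h2 : (fun x : ℝ => 2 * π - x) ⁻¹' (Ioo 0 (2 * π)) = Ioo 0 (2 * π) := by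
    ext x; simp only [mem_preimage, mem_Ioo]; constructor <;> rintro ⟨h, h'⟩ <;> constructor <;> linarith
  have h3 : muI = volume.restrict (Ioo 0 (2 * π)) :=
    Measure.restrict_congr_set Ioo_ae_eq_Ico.symm
  rw [h2, ← h3] at h1
  exact h1

lemma refl_emb : MeasurableEmbedding (fun x : ℝ => 2 * π - x) :=
  (Homeomorph.subLeft (2 * π)).measurableEmbedding

lemma VV_refl (x : ℝ) : VV (2 * π - x) = VV x := by
  unfold VV
  have := measurePreserving_refl.integral_comp refl_emb (fun y => K2 (2 * π - x) y)
  change ∫ y, _ ∂muI = ∫ y, _ ∂muI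
  rw [← this]
  simp_rw [K2_refl]

lemma VV_lower_aux {x : ℝ} (hx0 : 0 < x) (hx : x ≤ π) :
    1 ≤ VV x * Real.sin (x / 2) ^ (1 / 3 : ℝ) := by
  have hpi := Real.pi_pos
  have hpi3 := Real.pi_gt_three
  have hp := sinh_pos hx0 (by linarith)
  have hp1 := Real.sin_le_one (x / 2)
  have hcx : 0 ≤ Real.cos (x / 2) := Real.cos_nonneg_of_mem_Icc ⟨by linarith, by linarith⟩
  have hr3 : (Real.sin (x / 2) ^ (1 / 3 : ℝ)) ^ 3 = Real.sin (x / 2) := by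
    rw [← Real.rpow_natCast, ← Real.rpow_mul hp.le]; norm_num
  have hr1 : Real.sin (x / 2) ^ (1 / 3 : ℝ) ≤ 1 := Real.rpow_le_one hp.le hp1 (by norm_num)
  have hr0 : 0 < Real.sin (x / 2) ^ (1 / 3 : ℝ) := by positivity
  set r := Real.sin (x / 2) ^ (1 / 3 : ℝ) with hr
  have hle : ∀ y ∈ Ioo (2 * π - 2 * r) (2 * π), 2 / (3 * r ^ 2) ≤ K2 x y := by
    intro y hy
    have a1 := hy.1; have a2 := hy.2
    obtain ⟨t, rfl⟩ : ∃ t, y = 2 * π - 2 * t := ⟨(2 * π - y) / 2, by ring⟩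
    have ht0 : 0 < t := by linarith
    have htr : t < r := by linarith
    have e1 : Real.cos ((2 * π - 2 * t) / 2) = - Real.cos t := by
      rw [(sincos_refl _).1]; congr 2; ring
    have e2 : Real.sin ((2 * π - 2 * t) / 2) = Real.sin t := by
      rw [(sincos_refl _).2]; congr 1; ring
    have hq0 : 0 < Real.sin t := Real.sin_pos_of_pos_of_lt_pi ht0 (by linarith)
    have hqr : Real.sin t ≤ r := (Real.sin_le ht0.le).trans htr.le
    have hct : 0 ≤ Real.cos t := Real.cos_nonneg_of_mem_Icc ⟨by linarith, by linarith⟩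
    have hF : Fp x (2 * π - 2 * t) ≤ (3 * r ^ 2) ^ 2 := by
      unfold Fp
      rw [e1, e2]
      have s1 := Real.sin_sq_add_cos_sq (x / 2)
      have s2 := Real.sin_sq_add_cos_sq t
      have c1 := Real.cos_le_one (x / 2)
      have c2 := Real.cos_le_one t
      have k1 : 1 - Real.cos (x / 2) ≤ Real.sin (x / 2) ^ 2 := by nlinarith
      have k2 : 1 - Real.cos t ≤ Real.sin t ^ 2 := by nlinarith
      have k3 : Real.sin (x / 2) ≤ r := by
        rw [← hr3]; nlinarith [mul_nonneg hr0.le (sub_nonneg.2 hr1), sq_nonneg r]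
      have k4 : Real.sin (x / 2) ^ 2 ≤ r ^ 2 := pow_le_pow_left₀ hp.le k3 2
      have k5 : Real.sin t ^ 2 ≤ r ^ 2 := pow_le_pow_left₀ hq0.le hqr 2
      have k6 : |Real.cos (x / 2) + - Real.cos t| ≤ r ^ 2 := by
        rw [abs_le]; constructor <;> linarith
      have k7 : (Real.cos (x / 2) + - Real.cos t) ^ 2 ≤ (r ^ 2) ^ 2 := sq_le_sq' (by linarith [abs_le.1 k6]) (abs_le.1 k6).2
      have k8 : Real.sin (x / 2) * Real.sin t ≤ r ^ 3 * r := by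
        rw [hr3]; exact mul_le_mul_of_nonneg_left hqr hp.le
      nlinarith [sq_nonneg (r ^ 2)]
    have hFp := Fp_pos hx0 (by linarith) (show 0 < 2 * π - 2 * t by linarith) a2
    unfold K2
    apply div_le_div_of_nonneg_left (by norm_num) (Real.sqrt_pos.2 hFp)
    rw [← Real.sqrt_sq (show 0 ≤ 3 * r ^ 2 by positivity)]
    exact Real.sqrt_le_sqrt hF
  have h1 : ENNReal.ofReal (2 / (3 * r ^ 2)) * ENNReal.ofReal (2 * r) ≤ ENNReal.ofReal (VV x) := by
    rw [← lint_K2 hx0 (by linarith)]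
    calc ENNReal.ofReal (2 / (3 * r ^ 2)) * ENNReal.ofReal (2 * r)
        = ∫⁻ y in Ioo (2 * π - 2 * r) (2 * π), ENNReal.ofReal (2 / (3 * r ^ 2)) := by
          rw [setLIntegral_const, Real.volume_Ioo, sub_sub_cancel]
      _ ≤ ∫⁻ y in Ioo (2 * π - 2 * r) (2 * π), ENNReal.ofReal (K2 x y) :=
          setLIntegral_mono' measurableSet_Ioo
            (fun y hy => ENNReal.ofReal_le_ofReal (hle y hy))
      _ ≤ _ := lintegral_mono_set (show Ioo (2 * π - 2 * r) (2 * π) ⊆ II from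
          fun y hy => ⟨by linarith [hy.1], hy.2⟩)
  rw [← ENNReal.ofReal_mul (by positivity), ENNReal.ofReal_le_ofReal_iff (VV_nonneg x)] at h1
  calc (1 : ℝ) ≤ 4 / 3 := by norm_num
    _ = 2 / (3 * r ^ 2) * (2 * r) * r := by field_simp; norm_num
    _ ≤ _ := mul_le_mul_of_nonneg_right h1 hr0.le

lemma VV_lower {x : ℝ} (hx0 : 0 < x) (hx : x < 2 * π) :
    1 ≤ VV x * Real.sin (x / 2) ^ (1 / 3 : ℝ) := by
  rcases le_total x π with h | h
  · exact VV_lower_aux hx0 h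
  · have := VV_lower_aux (x := 2 * π - x) (by linarith) (by linarith)
    rwa [VV_refl, (sincos_refl x).2] at this

lemma VV_pos {x : ℝ} (hx0 : 0 < x) (hx : x < 2 * π) : 0 < VV x := by
  by_contra h
  have h0 : VV x = 0 := le_antisymm (not_lt.1 h) (VV_nonneg x)
  have := VV_lower hx0 hx
  rw [h0] at this; norm_num at this

lemma poly_bound {u v p q r : ℝ} (hp0 : 0 < p) (hp1 : p ≤ 1) (hq0 : 0 < q) (hq1 : q ≤ 1)
    (hr0 : 0 < r) (hr1 : r ≤ 1) (hr3 : r ^ 3 = p) (hu : p ^ 2 + u ^ 2 = 1)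
    (hv : q ^ 2 + v ^ 2 = 1)
    (h4 : 4 * (p * q) ≤ (u + v) ^ 2) (h5 : (u + v) ^ 2 ≤ 5 * (p * q)) :
    q * r ≤ 100 * (p ^ 2 + q ^ 2) := by
  have hqr : q * r ≤ 1 := by nlinarith
  rcases le_or_gt (1 / 10) p with hp | hp
  · nlinarith
  rcases le_or_gt (1 / 2) q with hq | hq
  · nlinarith
  have hpq : 0 < p * q := mul_pos hp0 hq0
  have hpq2 : p * q ≤ 1 / 20 := by nlinarith
  have e : (q ^ 2 - p ^ 2) ^ 2 = (u - v) ^ 2 * (u + v) ^ 2 := by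
    have : q ^ 2 - p ^ 2 = (u - v) * (u + v) := by linear_combination hv - hu
    rw [this]; ring
  have h6 : 1 ≤ (u - v) ^ 2 := by nlinarith
  have h7 : 4 * (p * q) ≤ (q ^ 2 - p ^ 2) ^ 2 := by rw [e]; nlinarith
  clear h6 e h4 h5 hu hv
  rcases le_total p q with hc | hc
  · have h8 : (q ^ 2 - p ^ 2) ^ 2 ≤ (q ^ 2) ^ 2 := by
      have := pow_le_pow_left₀ hp0.le hc 2
      exact pow_le_pow_left₀ (by linarith) (by linarith [sq_nonneg p]) 2
    have h9 : p ≤ q ^ 3 := by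
      refine le_of_mul_le_mul_right (?_ : p * q ≤ q ^ 3 * q) hq0
      have : (q ^ 2) ^ 2 = q ^ 3 * q := by ring
      linarith
    have h10 : r ≤ q := by
      by_contra hcon
      push Not at hcon
      have := pow_lt_pow_left₀ hcon hq0.le (n := 3) (by norm_num)
      linarith
    have h11 : q * r ≤ q * q := mul_le_mul_of_nonneg_left h10 hq0.le
    have h12 := sq_nonneg p
    have h13 : 0 < q * q := mul_pos hq0 hq0
    rw [sq q]; linarith
  · have h8 : (q ^ 2 - p ^ 2) ^ 2 ≤ (p ^ 2) ^ 2 := by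
      rw [← neg_sq, neg_sub]
      have := pow_le_pow_left₀ hq0.le hc 2
      exact pow_le_pow_left₀ (by linarith) (by linarith [sq_nonneg q]) 2
    have h9 : q ≤ p ^ 3 := by
      refine le_of_mul_le_mul_right (?_ : q * p ≤ p ^ 3 * p) hp0
      have : (p ^ 2) ^ 2 = p ^ 3 * p := by ring
      have : q * p = p * q := mul_comm _ _
      linarith
    have h10 : p ^ 3 ≤ p ^ 2 := pow_le_pow_of_le_one hp0.le hp1 (by norm_num)
    have h11 : q * r ≤ q * 1 := mul_le_mul_of_nonneg_left hr1 hq0.le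
    have h12 := sq_nonneg q
    have h13 := sq_nonneg p
    linarith

/-- the singular set -/
def singSet (ε : ℝ) : Set (ℝ × ℝ) :=
  {p | 0 < Fm p.1 p.2 ∧ Fm p.1 p.2 < ε * (Real.sin (p.1 / 2) * Real.sin (p.2 / 2))}

lemma measurable_singSet (ε : ℝ) : MeasurableSet (singSet ε) := by
  apply MeasurableSet.inter
  · exact measurableSet_lt measurable_const measurable_Fm
  · exact measurableSet_lt measurable_Fm (by fun_prop)

def rho (x y : ℝ) : ℝ :=
  (Real.cos (x / 2) + Real.cos (y / 2)) ^ 2 / (Real.sin (x / 2) * Real.sin (y / 2))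

lemma rho_deriv {x y : ℝ} (hx0 : 0 < x) (hx : x < 2 * π) (hy0 : 0 < y) (hy : y < 2 * π) :
    HasDerivAt (fun y => rho x y)
      (-((Real.cos (x / 2) + Real.cos (y / 2)) *
        (1 + Real.sin (y / 2) ^ 2 + Real.cos (x / 2) * Real.cos (y / 2)) /
        (2 * Real.sin (x / 2) * Real.sin (y / 2) ^ 2))) y := by
  have hp := sinh_pos hx0 hx
  have hq := sinh_pos hy0 hy
  have h2 : HasDerivAt (fun z : ℝ => z / 2) (1 / 2) y := (hasDerivAt_id y).div_const 2
  have hN := ((h2.cos.const_add (Real.cos (x / 2))).pow 2)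
  have hD := h2.sin.const_mul (Real.sin (x / 2))
  have h := hN.div hD (by positivity)
  refine h.congr_deriv ?_
  have s2 := Real.sin_sq_add_cos_sq (y / 2)
  have e : Real.cos (y / 2) ^ 2 = 1 - Real.sin (y / 2) ^ 2 := by linarith
  field_simp
  change -((2 : ℝ) * (cos (x / 2) + cos (y / 2)) ^ 1 * sin (y / 2) ^ 2) -
      cos (y / 2) * (cos (x / 2) + cos (y / 2)) ^ 2 = _
  linear_combination (-(cos (x / 2) + cos (y / 2))) * s2

/-! ### Estimate near the singularity of K1 -/

/-- the section of the singular set in the good half -/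
def secH (ε x : ℝ) : Set ℝ := Ioo 0 (2 * π - x) ∩ {y | (x, y) ∈ singSet ε}

lemma measurable_secH (ε x : ℝ) : MeasurableSet (secH ε x) :=
  measurableSet_Ioo.inter (measurable_prodMk_left (measurable_singSet ε))

lemma secH_facts {ε x y : ℝ} (hx0 : 0 < x) (hx : x < 2 * π) (hy : y ∈ secH ε x) :
    0 < Real.sin (x / 2) ∧ 0 < Real.sin (y / 2) ∧ 0 < Real.cos (x / 2) + Real.cos (y / 2) ∧
    0 < Fm x y ∧ rho x y - 4 = Fm x y / (Real.sin (x / 2) * Real.sin (y / 2)) ∧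
    Fm x y < ε * (Real.sin (x / 2) * Real.sin (y / 2)) := by
  obtain ⟨⟨h1, h2⟩, h3, h4⟩ := hy
  have hp := sinh_pos hx0 hx
  have hq := sinh_pos h1 (by linarith)
  refine ⟨hp, hq, ?_, h3, ?_, h4⟩
  · have := Real.cos_lt_cos_of_nonneg_of_le_pi (x := y / 2) (y := π - x / 2) (by linarith)
      (by linarith) (by linarith)
    rw [Real.cos_pi_sub] at this
    linarith
  · unfold rho Fm; field_simp

lemma K1_le_deriv {ε x y : ℝ} (hε1 : ε ≤ 1) (hx0 : 0 < x) (hx : x < 2 * π)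
    (hy : y ∈ secH ε x) :
    K1 x y ≤ 1600 * VV x * |(-((Real.cos (x / 2) + Real.cos (y / 2)) *
        (1 + Real.sin (y / 2) ^ 2 + Real.cos (x / 2) * Real.cos (y / 2)) /
        (2 * Real.sin (x / 2) * Real.sin (y / 2) ^ 2))) / (2 * √(rho x y - 4))| := by
  obtain ⟨hp, hq, hkv, hF, hrho, hFε⟩ := secH_facts hx0 hx hy
  have hV := VV_lower hx0 hx
  have hr3 : (Real.sin (x / 2) ^ (1 / 3 : ℝ)) ^ 3 = Real.sin (x / 2) := by
    rw [← Real.rpow_natCast, ← Real.rpow_mul hp.le]; norm_num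
  have hp1 := Real.sin_le_one (x / 2)
  have hq1 := Real.sin_le_one (y / 2)
  have hr1 : Real.sin (x / 2) ^ (1 / 3 : ℝ) ≤ 1 := Real.rpow_le_one hp.le hp1 (by norm_num)
  have hr0 : 0 < Real.sin (x / 2) ^ (1 / 3 : ℝ) := by positivity
  have hK : K1 x y = 4 / √(Fm x y) := by unfold K1; rw [if_pos hF]
  have hFe : Fm x y = (Real.cos (x / 2) + Real.cos (y / 2)) ^ 2
    - 4 * (Real.sin (x / 2) * Real.sin (y / 2)) := by unfold Fm; ring
  have su := Real.sin_sq_add_cos_sq (x / 2)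
  have sv := Real.sin_sq_add_cos_sq (y / 2)
  have hVp := VV_pos hx0 hx
  rw [hK, hrho]
  clear hK hrho
  generalize Fm x y = F at *
  generalize VV x = Vx at *
  generalize Real.sin (x / 2) ^ (1 / 3 : ℝ) = r at *
  generalize Real.sin (x / 2) = p at *
  generalize Real.sin (y / 2) = q at *
  generalize Real.cos (x / 2) = k at *
  generalize Real.cos (y / 2) = v at *
  have hpq : 0 < p * q := mul_pos hp hq
  have hb := poly_bound hp hp1 hq hq1 hr0 hr1 hr3 su sv (by linarith) (by nlinarith)
  have hq2 : q ≤ 100 * Vx * (p ^ 2 + q ^ 2) := by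
    calc q = q * 1 := (mul_one q).symm
      _ ≤ q * (Vx * r) := mul_le_mul_of_nonneg_left hV hq.le
      _ = Vx * (q * r) := by ring
      _ ≤ Vx * (100 * (p ^ 2 + q ^ 2)) := mul_le_mul_of_nonneg_left hb hVp.le
      _ = _ := by ring
  have hm0 : 0 < √(p * q) := Real.sqrt_pos.2 hpq
  have hm2 : √(p * q) * √(p * q) = p * q := Real.mul_self_sqrt hpq.le
  have hsF : 0 < √F := Real.sqrt_pos.2 hF
  have hkm : 2 * √(p * q) ≤ k + v := by
    refine abs_le_of_sq_le_sq' ?_ hkv.le |>.2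
    nlinarith
  have hbr : (p ^ 2 + q ^ 2) / 2 ≤ 1 + q ^ 2 + k * v := by nlinarith [sq_nonneg (k + v)]
  have hbr0 : 0 < 1 + q ^ 2 + k * v := lt_of_lt_of_le (by positivity) hbr
  rw [Real.sqrt_div hF.le, abs_div, abs_neg, abs_of_nonneg (by positivity),
    abs_of_nonneg (by positivity)]
  generalize √(p * q) = m at *
  have h1 : q * m ≤ 100 * Vx * ((k + v) * (1 + q ^ 2 + k * v)) := by
    calc q * m ≤ 100 * Vx * (p ^ 2 + q ^ 2) * m := mul_le_mul_of_nonneg_right hq2 hm0.le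
      _ = 100 * Vx * ((2 * m) * ((p ^ 2 + q ^ 2) / 2)) := by ring
      _ ≤ _ := mul_le_mul_of_nonneg_left (mul_le_mul hkm hbr (by positivity) hkv.le)
        (by positivity)
  have h2 : 4 / √F = 1600 * (q * m) * m / (4 * (p * q ^ 2) * √F) / 100 := by
    field_simp
    rw [show m ^ 2 = p * q by rw [sq, hm2]]; ring
  rw [h2]
  calc 1600 * (q * m) * m / (4 * (p * q ^ 2) * √F) / 100
      ≤ 1600 * (100 * Vx * ((k + v) * (1 + q ^ 2 + k * v))) * m / (4 * (p * q ^ 2) * √F) / 100 := by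
        gcongr
    _ = _ := by field_simp; norm_num

lemma sing_half {ε x : ℝ} (hε0 : 0 < ε) (hε1 : ε ≤ 1) (hx0 : 0 < x) (hx : x < 2 * π) :
    ∫⁻ y in secH ε x, ENNReal.ofReal (K1 x y) ≤ ENNReal.ofReal (1600 * VV x * √ε) := by
  have hVp := VV_pos hx0 hx
  have hanti : StrictAntiOn (fun y => rho x y) (Ioo 0 (2 * π - x)) := by
    apply strictAntiOn_of_deriv_neg (convex_Ioo _ _)
    · intro y hy
      exact (rho_deriv hx0 hx hy.1 (by linarith [hy.2])).continuousAt.continuousWithinAt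
    · intro y hy
      rw [interior_Ioo] at hy
      rw [(rho_deriv hx0 hx hy.1 (by linarith [hy.2])).deriv]
      have hp := sinh_pos hx0 hx
      have hq := sinh_pos hy.1 (by linarith [hy.2])
      have hkv : 0 < Real.cos (x / 2) + Real.cos (y / 2) := by
        have := Real.cos_lt_cos_of_nonneg_of_le_pi (x := y / 2) (y := π - x / 2)
          (by linarith [hy.1]) (by linarith) (by linarith [hy.2])
        rw [Real.cos_pi_sub] at this
        linarith
      have su := Real.sin_sq_add_cos_sq (x / 2)
      have sv := Real.sin_sq_add_cos_sq (y / 2)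
      have : 0 < 1 + Real.sin (y / 2) ^ 2 + Real.cos (x / 2) * Real.cos (y / 2) := by
        nlinarith [sq_nonneg (Real.cos (x / 2) + Real.cos (y / 2))]
      rw [neg_lt_zero]
      positivity
  have hinj : InjOn (fun y => √(rho x y - 4)) (secH ε x) := by
    intro y hy y' hy' he
    obtain ⟨hp, hq, hkv, hF, hrho, hFε⟩ := secH_facts hx0 hx hy
    obtain ⟨hp', hq', hkv', hF', hrho', hFε'⟩ := secH_facts hx0 hx hy'
    have h1 : rho x y - 4 = rho x y' - 4 :=
      (Real.sqrt_inj (by rw [hrho]; positivity) (by rw [hrho']; positivity)).1 he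
    exact hanti.injOn hy.1 hy'.1 (by simpa using h1)
  have hder : ∀ y ∈ secH ε x, HasDerivWithinAt (fun y => √(rho x y - 4))
      ((-((Real.cos (x / 2) + Real.cos (y / 2)) *
        (1 + Real.sin (y / 2) ^ 2 + Real.cos (x / 2) * Real.cos (y / 2)) /
        (2 * Real.sin (x / 2) * Real.sin (y / 2) ^ 2))) / (2 * √(rho x y - 4))) (secH ε x) y := by
    intro y hy
    obtain ⟨hp, hq, hkv, hF, hrho, hFε⟩ := secH_facts hx0 hx hy
    have h := (rho_deriv hx0 hx hy.1.1 (by linarith [hy.1.2])).sub_const 4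
    exact (h.sqrt (by rw [hrho]; positivity)).hasDerivWithinAt
  have hcv := lintegral_image_eq_lintegral_abs_deriv_mul (measurable_secH ε x) hder hinj (fun _ => 1)
  simp only [mul_one, lintegral_const, MeasurableSet.univ, Measure.restrict_apply, univ_inter,
    one_mul] at hcv
  have himg : (fun y => √(rho x y - 4)) '' (secH ε x) ⊆ Ioo 0 √ε := by
    rintro _ ⟨y, hy, rfl⟩
    obtain ⟨hp, hq, hkv, hF, hrho, hFε⟩ := secH_facts hx0 hx hy
    have h1 : 0 < rho x y - 4 := by rw [hrho]; positivity
    exact ⟨Real.sqrt_pos.2 h1, Real.sqrt_lt_sqrt h1.le (by rw [hrho, div_lt_iff₀ (by positivity)]; exact hFε)⟩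
  have hvol := measure_mono (μ := volume) himg
  rw [hcv, Real.volume_Ioo, sub_zero] at hvol
  calc ∫⁻ y in secH ε x, ENNReal.ofReal (K1 x y)
      ≤ ∫⁻ y in secH ε x, ENNReal.ofReal (1600 * VV x) * ENNReal.ofReal |(-((Real.cos (x / 2) + Real.cos (y / 2)) *
        (1 + Real.sin (y / 2) ^ 2 + Real.cos (x / 2) * Real.cos (y / 2)) /
        (2 * Real.sin (x / 2) * Real.sin (y / 2) ^ 2))) / (2 * √(rho x y - 4))| := by
        apply setLIntegral_mono' (measurable_secH ε x)
        intro y hy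
        rw [← ENNReal.ofReal_mul (by positivity)]
        exact ENNReal.ofReal_le_ofReal (K1_le_deriv hε1 hx0 hx hy)
    _ ≤ ENNReal.ofReal (1600 * VV x) * ENNReal.ofReal √ε := by
        rw [lintegral_const_mul' _ _ ENNReal.ofReal_ne_top]
        gcongr
    _ = _ := by rw [← ENNReal.ofReal_mul (by positivity)]

lemma singSet_refl (ε x y : ℝ) : (2 * π - x, 2 * π - y) ∈ singSet ε ↔ (x, y) ∈ singSet ε := by
  unfold singSet
  simp only [mem_ofPred_eq, Fm_refl, (sincos_refl _).2]

lemma sing_est {ε x : ℝ} (hε0 : 0 < ε) (hε1 : ε ≤ 1) (hx0 : 0 < x) (hx : x < 2 * π) :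
    ∫⁻ y in II, (singSet ε).indicator (fun p => ENNReal.ofReal (K1 p.1 p.2)) (x, y) ≤
      ENNReal.ofReal (3200 * √ε) * ENNReal.ofReal (VV x) := by
  have half : ∀ x : ℝ, 0 < x → x < 2 * π → ∫⁻ y in Ioo 0 (2 * π - x),
      (singSet ε).indicator (fun p => ENNReal.ofReal (K1 p.1 p.2)) (x, y) ≤
      ENNReal.ofReal (1600 * VV x * √ε) := by
    intro x hx0 hx
    refine le_trans (le_of_eq ?_) (sing_half hε0 hε1 hx0 hx)
    have hm : MeasurableSet {y | (x, y) ∈ singSet ε} :=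
      measurable_prodMk_left (measurable_singSet ε)
    unfold secH
    rw [inter_comm, ← Measure.restrict_restrict hm, ← lintegral_indicator hm]
    rfl
  have hVp := VV_pos hx0 hx
  rw [ae_II _ (show 0 < 2 * π - x by linarith) (by linarith)]
  have h1 := half x hx0 hx
  have h2 := half (2 * π - x) (by linarith) (by linarith)
  rw [VV_refl] at h2
  have h3 : ∫⁻ y in Ioo (2 * π - x) (2 * π),
      (singSet ε).indicator (fun p => ENNReal.ofReal (K1 p.1 p.2)) (x, y) ≤
      ENNReal.ofReal (1600 * VV x * √ε) := by
    refine le_trans (le_of_eq ?_) h2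
    rw [refl_lint]
    simp only [sub_self, sub_sub_cancel]
    congr 1; ext y
    have : (x, 2 * π - y) ∈ singSet ε ↔ (2 * π - x, y) ∈ singSet ε := by
      have := singSet_refl ε x (2 * π - y)
      rw [sub_sub_cancel] at this
      exact this.symm
    have e : K1 x (2 * π - y) = K1 (2 * π - x) y := by
      have := K1_refl x (2 * π - y)
      rw [sub_sub_cancel] at this
      exact this.symm
    by_cases h : (2 * π - x, y) ∈ singSet ε
    · rw [indicator_of_mem h, indicator_of_mem (this.2 h)]; simp only [e]
    · rw [indicator_of_notMem h, indicator_of_notMem (fun h' => h (this.1 h'))]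
  have h4 : ENNReal.ofReal (3200 * √ε) * ENNReal.ofReal (VV x) =
      ENNReal.ofReal (1600 * VV x * √ε) + ENNReal.ofReal (1600 * VV x * √ε) := by
    rw [← ENNReal.ofReal_mul (by positivity), ← ENNReal.ofReal_add (by positivity) (by positivity)]
    congr 1; ring
  rw [h4]
  first
    | exact add_le_add h1 h3
    | exact (add_comm _ _).trans_le (add_le_add h1 h3)

/-! ### Measures -/

instance instFinMuI : IsFiniteMeasure muI := by
  unfold muI II; infer_instance

/-- the measure with density `k` -/
def nuk (k : ℝ → ℝ → ℝ) : Measure (ℝ × ℝ) :=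
  (muI.prod muI).withDensity (fun p => ENNReal.ofReal (k p.1 p.2))

/-- the measure `V dx` -/
def muV : Measure ℝ := muI.withDensity (fun x => ENNReal.ofReal (VV x))

/-- admissible kernels -/
structure GoodK (k : ℝ → ℝ → ℝ) : Prop where
  meas : Measurable (fun p : ℝ × ℝ => k p.1 p.2)
  nonneg : ∀ x y, 0 ≤ k x y
  symm : ∀ x y, k x y = k y x
  lint : ∀ᵐ x ∂muI, ∫⁻ y, ENNReal.ofReal (k x y) ∂muI = ENNReal.ofReal (VV x)

lemma goodK2 : GoodK K2 where
  meas := measurable_K2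
  nonneg := K2_nonneg
  symm := K2_symm
  lint := by filter_upwards [ae_II_Ioo] with x hx using lint_K2 hx.1 hx.2

lemma goodK1 : GoodK K1 where
  meas := measurable_K1
  nonneg := K1_nonneg
  symm := K1_symm
  lint := by
    filter_upwards [ae_II_Ioo] with x hx
    have h := hB_all hx.1 hx.2 (fun _ => 1)
    simp only [mul_one] at h
    rw [← lint_K2 hx.1 hx.2, h]; rfl

lemma measurable_VV : Measurable VV := by
  have h : StronglyMeasurable (fun p : ℝ × ℝ => K2 p.1 p.2) := measurable_K2.stronglyMeasurable
  have := h.integral_prod_right' (ν := muI)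
  exact this.measurable

lemma lintegral_nuk {k : ℝ → ℝ → ℝ} (hk : GoodK k) {g : ℝ × ℝ → ℝ≥0∞} (hg : Measurable g) :
    ∫⁻ p, g p ∂(nuk k) = ∫⁻ x, ∫⁻ y, ENNReal.ofReal (k x y) * g (x, y) ∂muI ∂muI := by
  have hm : Measurable (fun p : ℝ × ℝ => ENNReal.ofReal (k p.1 p.2)) := hk.meas.ennreal_ofReal
  unfold nuk
  rw [lintegral_withDensity_eq_lintegral_mul _ hm hg, lintegral_prod _ (hm.mul hg).aemeasurable]
  rfl

lemma lintegral_muV {g : ℝ → ℝ≥0∞} (hg : Measurable g) :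
    ∫⁻ x, g x ∂muV = ∫⁻ x, ENNReal.ofReal (VV x) * g x ∂muI := by
  unfold muV
  rw [lintegral_withDensity_eq_lintegral_mul _ measurable_VV.ennreal_ofReal hg]
  rfl

lemma mp_of_lint {α β : Type*} [MeasurableSpace α] [MeasurableSpace β] {μ : Measure α}
    {ν : Measure β} {T : α → β} (hT : Measurable T)
    (h : ∀ g : β → ℝ≥0∞, Measurable g → ∫⁻ a, g (T a) ∂μ = ∫⁻ b, g b ∂ν) :
    MeasurePreserving T μ ν := by
  refine ⟨hT, Measure.ext_of_lintegral _ fun g hg => ?_⟩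
  rw [lintegral_map hg hT, h g hg]

lemma mp_fst {k : ℝ → ℝ → ℝ} (hk : GoodK k) : MeasurePreserving Prod.fst (nuk k) muV := by
  refine mp_of_lint measurable_fst fun g hg => ?_
  rw [lintegral_nuk hk (g := fun a => g a.1) (hg.comp measurable_fst), lintegral_muV hg]
  refine lintegral_congr_ae ?_
  filter_upwards [hk.lint] with x hx
  have hm : Measurable (fun y => ENNReal.ofReal (k x y)) :=
    hk.meas.ennreal_ofReal.comp (measurable_prodMk_left (x := x))
  rw [lintegral_mul_const _ hm, hx]

lemma mp_swap {k : ℝ → ℝ → ℝ} (hk : GoodK k) : MeasurePreserving Prod.swap (nuk k) (nuk k) := by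
  refine mp_of_lint measurable_swap fun g hg => ?_
  rw [lintegral_nuk hk (g := fun a => g a.swap) (hg.comp measurable_swap), lintegral_nuk hk hg]
  have hm : Measurable (fun p : ℝ × ℝ => ENNReal.ofReal (k p.1 p.2) * g p) :=
    hk.meas.ennreal_ofReal.mul hg
  have := lintegral_lintegral_swap (μ := muI) (ν := muI)
    (f := fun x y => ENNReal.ofReal (k x y) * g (x, y)) hm.aemeasurable
  rw [this]
  simp only [Prod.swap_prod_mk]
  refine lintegral_congr fun y => lintegral_congr fun x => ?_
  rw [hk.symm]

lemma mp_snd {k : ℝ → ℝ → ℝ} (hk : GoodK k) : MeasurePreserving Prod.snd (nuk k) muV :=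
  (mp_fst hk).comp (mp_swap hk)

/-- the involution z ↔ w -/
def sig2 (p : ℝ × ℝ) : ℝ × ℝ := (p.1, Wh p.1 p.2)

/-- map to the pair (x, y) -/
def tau (p : ℝ × ℝ) : ℝ × ℝ := (p.1, Yh p.1 p.2)

lemma measurable_sig2 : Measurable sig2 := measurable_fst.prodMk measurable_Wh
lemma measurable_tau : Measurable tau := measurable_fst.prodMk measurable_Yh

lemma mp_sig2 : MeasurePreserving sig2 (nuk K2) (nuk K2) := by
  refine mp_of_lint measurable_sig2 fun g hg => ?_
  rw [lintegral_nuk goodK2 (g := fun a => g (sig2 a)) (hg.comp measurable_sig2), lintegral_nuk goodK2 hg]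
  refine lintegral_congr_ae ?_
  filter_upwards [ae_II_Ioo] with x hx
  exact hA_all hx.1 hx.2 (fun z => g (x, z))

lemma mp_tau : MeasurePreserving tau (nuk K2) (nuk K1) := by
  refine mp_of_lint measurable_tau fun g hg => ?_
  rw [lintegral_nuk goodK2 (g := fun a => g (tau a)) (hg.comp measurable_tau), lintegral_nuk goodK1 hg]
  refine lintegral_congr_ae ?_
  filter_upwards [ae_II_Ioo] with x hx
  exact hB_all hx.1 hx.2 (fun z => g (x, z))

/-- coordinate maps -/
def cW (p : ℝ × ℝ) : ℝ := Wh p.1 p.2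
def cY (p : ℝ × ℝ) : ℝ := Yh p.1 p.2

lemma mp_cW : MeasurePreserving cW (nuk K2) muV := (mp_snd goodK2).comp mp_sig2
lemma mp_cY : MeasurePreserving cY (nuk K2) muV := (mp_snd goodK1).comp mp_tau

lemma muV_ac : muV ≪ muI := withDensity_absolutelyContinuous _ _
lemma muI_ac : muI ≪ muV := by
  refine withDensity_absolutelyContinuous' measurable_VV.ennreal_ofReal.aemeasurable ?_
  filter_upwards [ae_II_Ioo] with x hx
  simpa using VV_pos hx.1 hx.2
lemma nuk_ac (k) : nuk k ≪ muI.prod muI := withDensity_absolutelyContinuous _ _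

lemma ae_prod_Ioo : ∀ᵐ p ∂(muI.prod muI), (0 < p.1 ∧ p.1 < 2 * π) ∧ (0 < p.2 ∧ p.2 < 2 * π) := by
  have h1 := Measure.quasiMeasurePreserving_fst (μ := muI) (ν := muI) |>.ae ae_II_Ioo
  have h2 := Measure.quasiMeasurePreserving_snd (μ := muI) (ν := muI) |>.ae ae_II_Ioo
  filter_upwards [h1, h2] with p h1 h2 using ⟨h1, h2⟩

lemma nu2_ac : muI.prod muI ≪ nuk K2 := by
  refine withDensity_absolutelyContinuous' measurable_K2.ennreal_ofReal.aemeasurable ?_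
  filter_upwards [ae_prod_Ioo] with p hp
  simpa using K2_pos hp.1.1 hp.1.2 hp.2.1 hp.2.2

lemma ae_ne : ∀ᵐ p ∂(muI.prod muI), p.1 ≠ p.2 := by
  have hm : MeasurableSet {p : ℝ × ℝ | ¬ (p.1 ≠ p.2)} := by
    simp only [ne_eq, not_not]
    exact measurableSet_eq_fun measurable_fst measurable_snd
  rw [ae_iff, Measure.measure_prod_null hm]
  refine Eventually.of_forall fun x => ?_
  have : Prod.mk x ⁻¹' {p : ℝ × ℝ | ¬ (p.1 ≠ p.2)} = {x} := by ext y; simp [eq_comm]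
  change muI (Prod.mk x ⁻¹' {p : ℝ × ℝ | ¬ (p.1 ≠ p.2)}) = 0
  rw [this]
  simp [muI]

lemma ae_invol : ∀ᵐ p ∂(nuk K2), cW (sig2 p) = p.2 ∧ cY (sig2 p) = cY p := by
  refine nuk_ac K2 ?_
  filter_upwards [ae_prod_Ioo, ae_ne] with p hp hne
  exact ⟨Wh_invol hp.1.1 hp.1.2 hp.2.1 hp.2.2 hne, Yh_Wh hp.1.1 hp.1.2 hp.2.1 hp.2.2 hne⟩

lemma cY_swap (p : ℝ × ℝ) : cY p.swap = cW p := Yh_swap _ _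
lemma cW_swap (p : ℝ × ℝ) : cW p.swap = cY p := by
  have := cY_swap p.swap; rwa [Prod.swap_swap, eq_comm] at this

/-! ### Multiplication and composition operators -/

section ops
variable {α : Type*} [MeasurableSpace α] {μ : Measure α}

lemma mulOp_memLp {m : α → ℝ} (hm : Measurable m) {C : ℝ} (hC : ∀ᵐ a ∂μ, |m a| ≤ C)
    (f : Lp ℂ 2 μ) : MemLp (fun a => (m a : ℂ) * f a) 2 μ := by
  refine (Lp.memLp f).of_le_mul (c := C)
    ((Complex.measurable_ofReal.comp hm).aestronglyMeasurable.mul (Lp.aestronglyMeasurable f)) ?_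
  filter_upwards [hC] with a ha
  rw [norm_mul, Complex.norm_real]
  exact mul_le_mul_of_nonneg_right ha (norm_nonneg _)

/-- multiplication by a bounded real function -/
def mulOp (m : α → ℝ) (hm : Measurable m) (C : ℝ) (hC : ∀ᵐ a ∂μ, |m a| ≤ C) :
    Lp ℂ 2 μ →L[ℂ] Lp ℂ 2 μ :=
  LinearMap.mkContinuous
    { toFun := fun f => (mulOp_memLp hm hC f).toLp _
      map_add' := by
        intro f g
        rw [← MemLp.toLp_add, MemLp.toLp_eq_toLp_iff]
        filter_upwards [Lp.coeFn_add f g] with a ha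
        simp only [Pi.add_apply, ha]; ring
      map_smul' := by
        intro c f
        rw [RingHom.id_apply, ← MemLp.toLp_const_smul, MemLp.toLp_eq_toLp_iff]
        filter_upwards [Lp.coeFn_smul c f] with a ha
        simp only [Pi.smul_apply, ha, smul_eq_mul]; ring }
    C (by
      intro f
      refine Lp.norm_le_mul_norm_of_ae_le_mul ?_
      filter_upwards [hC, (mulOp_memLp hm hC f).coeFn_toLp] with a ha h
      simp only [LinearMap.coe_mk, AddHom.coe_mk]
      rw [h, norm_mul, Complex.norm_real]
      exact mul_le_mul_of_nonneg_right ha (norm_nonneg _))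

lemma mulOp_coe {m : α → ℝ} (hm : Measurable m) {C : ℝ} (hC : ∀ᵐ a ∂μ, |m a| ≤ C)
    (f : Lp ℂ 2 μ) : mulOp m hm C hC f =ᵐ[μ] fun a => (m a : ℂ) * f a :=
  (mulOp_memLp hm hC f).coeFn_toLp

lemma mulOp_inner {m : α → ℝ} (hm : Measurable m) {C : ℝ} (hC : ∀ᵐ a ∂μ, |m a| ≤ C)
    (f g : Lp ℂ 2 μ) : inner ℂ (mulOp m hm C hC f) g = inner ℂ f (mulOp m hm C hC g) := by
  rw [L2.inner_def, L2.inner_def]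
  refine integral_congr_ae ?_
  filter_upwards [mulOp_coe hm hC f, mulOp_coe hm hC g] with a h1 h2
  rw [h1, h2]
  simp only [RCLike.inner_apply, map_mul, Complex.conj_ofReal]; ring

lemma mulOp_adj {m : α → ℝ} (hm : Measurable m) {C : ℝ} (hC : ∀ᵐ a ∂μ, |m a| ≤ C) :
    ContinuousLinearMap.adjoint (mulOp (μ := μ) m hm C hC) = mulOp m hm C hC := by
  symm
  rw [ContinuousLinearMap.eq_adjoint_iff]
  exact mulOp_inner hm hC

end ops

/-- the weight V^(-1/2) -/
def vh (x : ℝ) : ℝ := VV x ^ (-(1 : ℝ) / 2)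

lemma measurable_vh : Measurable vh := measurable_VV.pow_const _
lemma vh_nonneg (x : ℝ) : 0 ≤ vh x := Real.rpow_nonneg (VV_nonneg x) _
lemma vh_sq {x : ℝ} (hx : 0 < VV x) : vh x * vh x = (VV x)⁻¹ := by
  unfold vh; rw [← Real.rpow_add hx]; norm_num [Real.rpow_neg_one]

lemma Mv_lint (f : ℝ → ℂ) (hf : StronglyMeasurable f) :
    eLpNorm (fun x => (vh x : ℂ) * f x) 2 muV = eLpNorm f 2 muI := by
  rw [eLpNorm_eq_lintegral_rpow_enorm_toReal (by norm_num) (by norm_num),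
    eLpNorm_eq_lintegral_rpow_enorm_toReal (by norm_num) (by norm_num)]
  congr 1
  rw [lintegral_muV]
  · refine lintegral_congr_ae ?_
    filter_upwards [ae_II_Ioo] with x hx
    have hV := VV_pos hx.1 hx.2
    have e : ‖(vh x : ℂ) * f x‖ₑ = ENNReal.ofReal (vh x) * ‖f x‖ₑ := by
      rw [enorm_mul]; congr 1
      rw [← ofReal_norm_eq_enorm, Complex.norm_real, Real.norm_of_nonneg (vh_nonneg x)]
    rw [e]
    simp only [ENNReal.toReal_ofNat, ENNReal.rpow_ofNat]
    rw [mul_pow, ← mul_assoc, ← ENNReal.ofReal_pow (vh_nonneg x),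
      ← ENNReal.ofReal_mul (VV_nonneg x), sq, vh_sq hV, mul_inv_cancel₀ hV.ne',
      ENNReal.ofReal_one, one_mul]
  · have h1 : Measurable (fun x => (vh x : ℂ) * f x) :=
      (Complex.measurable_ofReal.comp measurable_vh).mul hf.measurable
    exact h1.enorm.pow_const _

lemma Mv_memLp (f : Lp ℂ 2 muI) : MemLp (fun x => (vh x : ℂ) * f x) 2 muV := by
  have h1 : Measurable (fun x => (vh x : ℂ) * f x) :=
      (Complex.measurable_ofReal.comp measurable_vh).mul (Lp.stronglyMeasurable f).measurable
  refine ⟨h1.aestronglyMeasurable, ?_⟩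
  rw [Mv_lint _ (Lp.stronglyMeasurable f)]
  exact (Lp.memLp f).2

/-- isometry L²(dx) → L²(V dx) -/
def Mv : Lp ℂ 2 muI →ₗᵢ[ℂ] Lp ℂ 2 muV where
  toFun f := (Mv_memLp f).toLp _
  map_add' := by
    intro f g
    rw [← MemLp.toLp_add, MemLp.toLp_eq_toLp_iff]
    filter_upwards [muV_ac.ae_le (Lp.coeFn_add f g)] with a ha
    simp only [Pi.add_apply, ha]; ring
  map_smul' := by
    intro c f
    rw [RingHom.id_apply, ← MemLp.toLp_const_smul, MemLp.toLp_eq_toLp_iff]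
    filter_upwards [muV_ac.ae_le (Lp.coeFn_smul c f)] with a ha
    simp only [Pi.smul_apply, ha, smul_eq_mul]; ring
  norm_map' := by
    intro f
    simp only [LinearMap.coe_mk, AddHom.coe_mk]
    rw [Lp.norm_toLp, Mv_lint _ (Lp.stronglyMeasurable f), Lp.norm_def]

lemma Mv_coe (f : Lp ℂ 2 muI) : Mv f =ᵐ[muV] fun x => (vh x : ℂ) * f x :=
  (Mv_memLp f).coeFn_toLp

section J
variable {α : Type*} [MeasurableSpace α] {ν : Measure α}
variable {β : Type*} [MeasurableSpace β] {ν' : Measure β}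

/-- the pulled back isometry -/
def Jc (u : α → ℝ) (hu : MeasurePreserving u ν muV) : Lp ℂ 2 muI →ₗᵢ[ℂ] Lp ℂ 2 ν :=
  (Lp.compMeasurePreservingₗᵢ ℂ u hu).comp Mv

lemma Jc_coe (u : α → ℝ) (hu : MeasurePreserving u ν muV) (f : Lp ℂ 2 muI) :
    Jc u hu f =ᵐ[ν] fun p => (vh (u p) : ℂ) * f (u p) := by
  have h1 : Jc u hu f =ᵐ[ν] Mv f ∘ u := Lp.coeFn_compMeasurePreserving (Mv f) hu
  have h2 := hu.quasiMeasurePreserving.ae (Mv_coe f)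
  filter_upwards [h1, h2] with p h1 h2
  rw [h1, Function.comp_apply, h2]

lemma Jc_inv {T : β → α} (hT : MeasurePreserving T ν' ν) {u v : α → ℝ} {u' v' : β → ℝ}
    (hu : MeasurePreserving u ν muV) (hv : MeasurePreserving v ν muV)
    (hu' : MeasurePreserving u' ν' muV) (hv' : MeasurePreserving v' ν' muV)
    (e1 : ∀ᵐ p ∂ν', u (T p) = u' p) (e2 : ∀ᵐ p ∂ν', v (T p) = v' p) (f g : Lp ℂ 2 muI) :
    inner ℂ (Jc u' hu' f) (Jc v' hv' g) = inner ℂ (Jc u hu f) (Jc v hv g) := by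
  have key : ∀ {w : α → ℝ} {w' : β → ℝ} (hw : MeasurePreserving w ν muV)
      (hw' : MeasurePreserving w' ν' muV) (e : ∀ᵐ p ∂ν', w (T p) = w' p) (f : Lp ℂ 2 muI),
      Jc w' hw' f = Lp.compMeasurePreservingₗᵢ ℂ T hT (Jc w hw f) := by
    intro w w' hw hw' e f
    refine Lp.ext ?_
    have h1 : Lp.compMeasurePreservingₗᵢ ℂ T hT (Jc w hw f) =ᵐ[ν'] (Jc w hw f) ∘ T :=
      Lp.coeFn_compMeasurePreserving _ hT
    have h2 := hT.quasiMeasurePreserving.ae (Jc_coe w hw f)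
    filter_upwards [h1, h2, e, Jc_coe w' hw' f] with p h1 h2 h3 h4
    rw [h4, h1, Function.comp_apply, h2, h3]
  rw [key hu hu' e1, key hv hv' e2, LinearIsometry.inner_map_map]

end J

/-! ### The operator B -/

/-- the integral operator with kernel `V^(-1/2) k V^(-1/2)` -/
def BK {k : ℝ → ℝ → ℝ} (hk : GoodK k) : Lp ℂ 2 muI →L[ℂ] Lp ℂ 2 muI :=
  ContinuousLinearMap.adjoint (Jc Prod.fst (mp_fst hk)).toContinuousLinearMap ∘L
    (Jc Prod.snd (mp_snd hk)).toContinuousLinearMap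

lemma BK_inner {k : ℝ → ℝ → ℝ} (hk : GoodK k) (f g : Lp ℂ 2 muI) :
    inner ℂ f (BK hk g) = inner ℂ (Jc Prod.fst (mp_fst hk) f) (Jc Prod.snd (mp_snd hk) g) := by
  unfold BK
  rw [ContinuousLinearMap.comp_apply, ContinuousLinearMap.adjoint_inner_right]
  rfl

/-- the operator B -/
def BB : Lp ℂ 2 muI →L[ℂ] Lp ℂ 2 muI := (2 : ℂ) • BK goodK2 - BK goodK1

/-- the square root of 1 - B -/
def AA : Lp ℂ 2 muI →L[ℂ] Lp ℂ 2 (nuk K2) :=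
  (1 / 2 : ℂ) • ((Jc Prod.fst (mp_fst goodK2)).toContinuousLinearMap
    + (Jc cY mp_cY).toContinuousLinearMap
    - (Jc Prod.snd (mp_snd goodK2)).toContinuousLinearMap - (Jc cW mp_cW).toContinuousLinearMap)

lemma AA_inner (f g : Lp ℂ 2 muI) :
    inner ℂ (AA f) (AA g) = inner ℂ f g - inner ℂ f (BB g) := by
  have hx := mp_fst goodK2
  have hz := mp_snd goodK2
  have hs := mp_swap goodK2
  have tr : ∀ {u : ℝ × ℝ → ℝ} {v : ℝ × ℝ → ℝ}, (∀ p, u p = v p) → ∀ᵐ p ∂(nuk K2), u p = v p :=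
    fun h => Eventually.of_forall h
  have xz : inner ℂ (Jc _ (mp_fst goodK2) f) (Jc _ (mp_snd goodK2) g) = inner ℂ f (BK goodK2 g) :=
    (BK_inner goodK2 f g).symm
  have zx : inner ℂ (Jc _ (mp_snd goodK2) f) (Jc _ (mp_fst goodK2) g) = inner ℂ f (BK goodK2 g) := by
    rw [← xz]
    exact Jc_inv hs hx hz hz hx (tr fun p => rfl) (tr fun p => rfl) f g
  have xw : inner ℂ (Jc _ (mp_fst goodK2) f) (Jc _ mp_cW g) = inner ℂ f (BK goodK2 g) := by
    rw [← xz]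
    exact Jc_inv mp_sig2 hx hz hx mp_cW (tr fun p => rfl) (tr fun p => rfl) f g
  have wx : inner ℂ (Jc _ mp_cW f) (Jc _ (mp_fst goodK2) g) = inner ℂ f (BK goodK2 g) := by
    rw [← zx]
    exact Jc_inv mp_sig2 hz hx mp_cW hx (tr fun p => rfl) (tr fun p => rfl) f g
  have zy : inner ℂ (Jc _ (mp_snd goodK2) f) (Jc _ mp_cY g) = inner ℂ f (BK goodK2 g) := by
    rw [← xw]
    exact Jc_inv hs hx mp_cW hz mp_cY (tr fun p => rfl) (tr cW_swap) f g
  have yz : inner ℂ (Jc _ mp_cY f) (Jc _ (mp_snd goodK2) g) = inner ℂ f (BK goodK2 g) := by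
    rw [← wx]
    exact Jc_inv hs mp_cW hx mp_cY hz (tr cW_swap) (tr fun p => rfl) f g
  have wy : inner ℂ (Jc _ mp_cW f) (Jc _ mp_cY g) = inner ℂ f (BK goodK2 g) := by
    rw [← zy]
    exact Jc_inv mp_sig2 hz mp_cY mp_cW mp_cY (tr fun p => rfl) (ae_invol.mono fun p h => h.2) f g
  have yw : inner ℂ (Jc _ mp_cY f) (Jc _ mp_cW g) = inner ℂ f (BK goodK2 g) := by
    rw [← yz]
    exact Jc_inv mp_sig2 mp_cY hz mp_cY mp_cW (ae_invol.mono fun p h => h.2) (tr fun p => rfl) f g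
  have xy : inner ℂ (Jc _ (mp_fst goodK2) f) (Jc _ mp_cY g) = inner ℂ f (BK goodK1 g) := by
    rw [BK_inner goodK1]
    exact Jc_inv mp_tau (mp_fst goodK1) (mp_snd goodK1) hx mp_cY (tr fun p => rfl) (tr fun p => rfl) f g
  have yx : inner ℂ (Jc _ mp_cY f) (Jc _ (mp_fst goodK2) g) = inner ℂ f (BK goodK1 g) := by
    have h1 : inner ℂ (Jc _ (mp_snd goodK1) f) (Jc _ (mp_fst goodK1) g) =
        inner ℂ f (BK goodK1 g) := by
      rw [BK_inner goodK1]
      exact Jc_inv (mp_swap goodK1) (mp_fst goodK1) (mp_snd goodK1) (mp_snd goodK1) (mp_fst goodK1) (Eventually.of_forall fun p => rfl)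
        (Eventually.of_forall fun p => rfl) f g
    rw [← h1]
    exact Jc_inv mp_tau (mp_snd goodK1) (mp_fst goodK1) mp_cY hx (tr fun p => rfl) (tr fun p => rfl) f g
  have zw : inner ℂ (Jc _ (mp_snd goodK2) f) (Jc _ mp_cW g) = inner ℂ f (BK goodK1 g) := by
    rw [← xy]
    exact Jc_inv hs hx mp_cY hz mp_cW (tr fun p => rfl) (tr cY_swap) f g
  have wz : inner ℂ (Jc _ mp_cW f) (Jc _ (mp_snd goodK2) g) = inner ℂ f (BK goodK1 g) := by
    rw [← yx]
    exact Jc_inv hs mp_cY hx mp_cW hz (tr cY_swap) (tr fun p => rfl) f g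
  have eA : ∀ f, AA f = (1 / 2 : ℂ) • (Jc _ (mp_fst goodK2) f + Jc _ mp_cY f
    - Jc _ (mp_snd goodK2) f - Jc _ mp_cW f) := fun f => rfl
  have eB : BB g = (2 : ℂ) • BK goodK2 g - BK goodK1 g := rfl
  rw [eA, eA, eB, inner_smul_left, inner_smul_right, inner_sub_right f, inner_smul_right]
  simp only [inner_add_left, inner_add_right, inner_sub_left, inner_sub_right,
    LinearIsometry.inner_map_map, xz, zx, xw, wx, zy, yz, wy, yw, xy, yx, zw, wz]
  rw [show (starRingEnd ℂ) (1 / 2) = 1 / 2 by rw [map_div₀, map_one, map_ofNat]]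
  ring

lemma BB_eq : 1 - BB = ContinuousLinearMap.adjoint AA ∘L AA := by
  ext1 g
  refine ext_inner_left ℂ fun f => ?_
  rw [ContinuousLinearMap.comp_apply, ContinuousLinearMap.adjoint_inner_right, AA_inner]
  simp [inner_sub_right]

lemma one_sub_BB_pos : (1 - BB).IsPositive := by
  rw [BB_eq]; exact ContinuousLinearMap.isPositive_adjoint_comp_self AA

lemma BB_sa : IsSelfAdjoint BB := by
  have h : BB = 1 - (1 - BB) := by abel
  rw [h]
  exact (IsSelfAdjoint.one _).sub one_sub_BB_pos.isSelfAdjoint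

lemma BB_fix (ψ : Lp ℂ 2 muI) : BB ψ = ψ ↔ AA ψ = 0 := by
  have e : (1 - BB) ψ = ψ - BB ψ := rfl
  constructor
  · intro h
    have := AA_inner ψ ψ
    rw [h, sub_self] at this
    exact inner_self_eq_zero.1 this
  · intro h
    have h2 : (1 - BB) ψ = 0 := by rw [BB_eq, ContinuousLinearMap.comp_apply, h, map_zero]
    rw [e, sub_eq_zero] at h2
    exact h2.symm

lemma AA_zero (ψ : Lp ℂ 2 muI) : AA ψ = 0 ↔ ∀ᵐ p ∂(muI.prod muI),
    (vh p.1 : ℂ) * ψ p.1 + (vh (cY p) : ℂ) * ψ (cY p) - (vh p.2 : ℂ) * ψ p.2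
      - (vh (cW p) : ℂ) * ψ (cW p) = 0 := by
  have e : AA ψ = 0 ↔ Jc _ (mp_fst goodK2) ψ + Jc _ mp_cY ψ
    - Jc _ (mp_snd goodK2) ψ - Jc _ mp_cW ψ = 0 := by
    change (1 / 2 : ℂ) • _ = (0 : Lp ℂ 2 (nuk K2)) ↔ _
    rw [smul_eq_zero_iff_right (by norm_num)]; rfl
  rw [e, Lp.eq_zero_iff_ae_eq_zero]
  have hae : (Jc _ (mp_fst goodK2) ψ + Jc _ mp_cY ψ
    - Jc _ (mp_snd goodK2) ψ - Jc _ mp_cW ψ : Lp ℂ 2 (nuk K2)) =ᵐ[nuk K2]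
    fun p => (vh p.1 : ℂ) * ψ p.1 + (vh (cY p) : ℂ) * ψ (cY p) - (vh p.2 : ℂ) * ψ p.2
      - (vh (cW p) : ℂ) * ψ (cW p) := by
    filter_upwards [Jc_coe _ (mp_fst goodK2) ψ, Jc_coe _ mp_cY ψ, Jc_coe _ (mp_snd goodK2) ψ,
      Jc_coe _ mp_cW ψ, Lp.coeFn_sub (Jc _ (mp_fst goodK2) ψ + Jc _ mp_cY ψ
    - Jc _ (mp_snd goodK2) ψ) (Jc _ mp_cW ψ), Lp.coeFn_sub (Jc _ (mp_fst goodK2) ψ + Jc _ mp_cY ψ)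
      (Jc _ (mp_snd goodK2) ψ), Lp.coeFn_add (Jc _ (mp_fst goodK2) ψ) (Jc _ mp_cY ψ)]
      with p h1 h2 h3 h4 h5 h6 h7
    rw [h5, Pi.sub_apply, h6, Pi.sub_apply, h7, Pi.add_apply, h1, h2, h3, h4]
  constructor
  · intro h
    refine nu2_ac.ae_le ?_
    filter_upwards [h, hae] with p h h' using by rw [← h', h]; rfl
  · intro h
    filter_upwards [(nuk_ac K2).ae_le h, hae] with p h h' using by rw [h', h]; rfl

/-! ### The collisional invariant condition on the plane -/

lemma qmp_mod : Measure.QuasiMeasurePreserving mod2pi volume muI := by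
  refine ⟨measurable_mod2pi, ?_⟩
  refine Measure.AbsolutelyContinuous.mk fun s hs h0 => ?_
  rw [Measure.map_apply measurable_mod2pi hs]
  have hsI : volume (s ∩ II) = 0 := by
    rw [← Measure.restrict_apply hs]; exact h0
  have hsub : mod2pi ⁻¹' s ⊆ ⋃ n : ℤ, (fun x => x - 2 * π * n) ⁻¹' (s ∩ II) := by
    intro x hx
    rw [mem_iUnion]
    exact ⟨⌊x / (2 * π)⌋, hx, mod2pi_mem x⟩
  refine measure_mono_null hsub (measure_iUnion_null fun n => ?_)
  rw [(measurePreserving_sub_right volume (2 * π * n)).measure_preimage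
    (hs.inter (show MeasurableSet II from measurableSet_Ico)).nullMeasurableSet]
  exact hsI

lemma mod2pi_hFPU (x z : ℝ) : mod2pi (hFPU x z) = Yh (mod2pi x) (mod2pi z) := by
  unfold Yh hFPU
  rw [← mod2pi_add_int (h0 (mod2pi x) (mod2pi z) - (x - mod2pi x)) ⌊x / (2 * π)⌋]
  congr 1
  unfold mod2pi; ring

lemma mod2pi_hFPU2 (x z : ℝ) : mod2pi (x - z + hFPU x z) = Wh (mod2pi x) (mod2pi z) := by
  unfold Wh hFPU
  rw [← mod2pi_add_int (x - z + (h0 (mod2pi x) (mod2pi z) - (x - mod2pi x))) ⌊z / (2 * π)⌋]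
  congr 1
  have : z - mod2pi z = 2 * π * (⌊z / (2 * π)⌋ : ℝ) := by unfold mod2pi; ring
  rw [← this]; ring

lemma collis_iff (ψ : Lp ℂ 2 muI) : (∀ᵐ p ∂(muI.prod muI),
    (vh p.1 : ℂ) * ψ p.1 + (vh (cY p) : ℂ) * ψ (cY p) - (vh p.2 : ℂ) * ψ p.2
      - (vh (cW p) : ℂ) * ψ (cW p) = 0) ↔ ∀ᵐ p : ℝ × ℝ,
          periodicVinvHalf ψ p.1 + periodicVinvHalf ψ (hFPU p.1 p.2)
            - periodicVinvHalf ψ p.2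
            - periodicVinvHalf ψ (p.1 - p.2 + hFPU p.1 p.2) = 0 := by
  have key : ∀ p : ℝ × ℝ, periodicVinvHalf ψ p.1 + periodicVinvHalf ψ (hFPU p.1 p.2)
            - periodicVinvHalf ψ p.2
            - periodicVinvHalf ψ (p.1 - p.2 + hFPU p.1 p.2) =
      (vh (mod2pi p.1) : ℂ) * ψ (mod2pi p.1)
      + (vh (cY (Prod.map mod2pi mod2pi p)) : ℂ) * ψ (cY (Prod.map mod2pi mod2pi p))
      - (vh (mod2pi p.2) : ℂ) * ψ (mod2pi p.2)
      - (vh (cW (Prod.map mod2pi mod2pi p)) : ℂ) * ψ (cW (Prod.map mod2pi mod2pi p)) := by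
    intro p
    unfold periodicVinvHalf
    rw [mod2pi_hFPU, mod2pi_hFPU2]
    rfl
  simp_rw [key]
  constructor
  · intro h
    have hq : Measure.QuasiMeasurePreserving (Prod.map mod2pi mod2pi)
        (volume : Measure (ℝ × ℝ)) (muI.prod muI) := by
      rw [Measure.volume_eq_prod]
      exact MeasureTheory.QuasiMeasurePreserving.prodMap qmp_mod qmp_mod
    exact hq.ae h
  · intro h
    have hac : muI.prod muI ≪ (volume : Measure (ℝ × ℝ)) := by
      rw [Measure.volume_eq_prod]
      exact Measure.AbsolutelyContinuous.prod Measure.restrict_le_self.absolutelyContinuous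
        Measure.restrict_le_self.absolutelyContinuous
    filter_upwards [hac.ae_le h, ae_prod_Ioo] with p hp hI
    have e1 : mod2pi p.1 = p.1 := mod2pi_of_mem hI.1.1.le hI.1.2
    have e2 : mod2pi p.2 = p.2 := mod2pi_of_mem hI.2.1.le hI.2.2
    have e3 : Prod.map mod2pi mod2pi p = p := Prod.ext e1 e2
    rw [e1, e2, e3] at hp
    exact hp

/-! ### Kernel formula -/

lemma BK_int {k : ℝ → ℝ → ℝ} (hk : GoodK k) (φ f : Lp ℂ 2 muI) :
    Integrable (fun p : ℝ × ℝ => (k p.1 p.2 : ℂ) *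
      (((vh p.2 : ℂ) * f p.2) * conj ((vh p.1 : ℂ) * φ p.1))) (muI.prod muI) ∧
    inner ℂ φ (BK hk f) = ∫ p, (k p.1 p.2 : ℂ) *
      (((vh p.2 : ℂ) * f p.2) * conj ((vh p.1 : ℂ) * φ p.1)) ∂(muI.prod muI) := by
  have hm : Measurable (fun p : ℝ × ℝ => ENNReal.ofReal (k p.1 p.2)) := hk.meas.ennreal_ofReal
  have hlt : ∀ᵐ p ∂(muI.prod muI), ENNReal.ofReal (k p.1 p.2) < ∞ :=
    Eventually.of_forall fun p => ENNReal.ofReal_lt_top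
  have hae : (fun p => inner ℂ (Jc Prod.fst (mp_fst hk) φ p) (Jc Prod.snd (mp_snd hk) f p))
      =ᵐ[nuk k] fun p => ((vh p.2 : ℂ) * f p.2) * conj ((vh p.1 : ℂ) * φ p.1) := by
    filter_upwards [Jc_coe Prod.fst (mp_fst hk) φ, Jc_coe Prod.snd (mp_snd hk) f] with p h1 h2
    rw [h1, h2, RCLike.inner_apply]
  have hsm : (fun p : ℝ × ℝ => (k p.1 p.2 : ℂ) *
      (((vh p.2 : ℂ) * f p.2) * conj ((vh p.1 : ℂ) * φ p.1))) =
      fun p : ℝ × ℝ => (ENNReal.ofReal (k p.1 p.2)).toReal •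
        (((vh p.2 : ℂ) * f p.2) * conj ((vh p.1 : ℂ) * φ p.1)) := by
    ext p
    rw [ENNReal.toReal_ofReal (hk.nonneg _ _), Complex.real_smul]
  constructor
  · have h1 := (L2.integrable_inner (𝕜 := ℂ) (Jc Prod.fst (mp_fst hk) φ)
      (Jc Prod.snd (mp_snd hk) f)).congr hae
    rw [hsm]
    exact (integrable_withDensity_iff_integrable_smul' hm hlt).1 h1
  · rw [BK_inner, L2.inner_def, integral_congr_ae hae, hsm]
    exact integral_withDensity_eq_integral_toReal_smul₀ hm.aemeasurable hlt _

/-- the kernel integrand -/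
def kint (k : ℝ → ℝ → ℝ) (f : ℝ → ℂ) (p : ℝ × ℝ) : ℂ :=
  ((vh p.1 * k p.1 p.2 * vh p.2 : ℝ) : ℂ) * f p.2

lemma kint_integrable {k : ℝ → ℝ → ℝ} (hk : GoodK k) (f : Lp ℂ 2 muI) :
    Integrable (kint k f) (muI.prod muI) := by
  have h := (BK_int hk (indicatorConstLp 2 MeasurableSet.univ (measure_ne_top muI _) (1 : ℂ)) f).1
  refine h.congr ?_
  have h1 := Measure.quasiMeasurePreserving_fst (μ := muI) (ν := muI) |>.ae
    (indicatorConstLp_coeFn (p := 2) (hs := MeasurableSet.univ) (hμs := measure_ne_top muI _)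
      (c := (1 : ℂ)))
  filter_upwards [h1] with p hp
  rw [hp]
  simp only [indicator_univ, mul_one, Complex.conj_ofReal, kint]
  push_cast; ring

lemma kint_integrable_right {k : ℝ → ℝ → ℝ} (hk : GoodK k) (f : Lp ℂ 2 muI) :
    ∀ᵐ x ∂muI, Integrable (fun y => kint k f (x, y)) muI :=
  (kint_integrable hk f).prod_right_ae

lemma BK_kernel {k : ℝ → ℝ → ℝ} (hk : GoodK k) (f : Lp ℂ 2 muI) :
    BK hk f =ᵐ[muI] fun x => ∫ y, kint k f (x, y) ∂muI := by
  have hI := kint_integrable hk f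
  refine Integrable.ae_eq_of_forall_setIntegral_eq _ _
    ((Lp.memLp _).integrable one_le_two) hI.integral_prod_left ?_
  intro s hs hlt
  rw [← L2.inner_indicatorConstLp_one hs hlt.ne, (BK_int hk _ f).2]
  have h1 := Measure.quasiMeasurePreserving_fst (μ := muI) (ν := muI) |>.ae
    (indicatorConstLp_coeFn (p := 2) (hs := hs) (hμs := hlt.ne) (c := (1 : ℂ)))
  have h2 : (fun p : ℝ × ℝ => (k p.1 p.2 : ℂ) * (((vh p.2 : ℂ) * f p.2) *
      conj ((vh p.1 : ℂ) * (indicatorConstLp 2 hs hlt.ne (1 : ℂ) : Lp ℂ 2 muI) p.1)))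
      =ᵐ[muI.prod muI] (Prod.fst ⁻¹' s).indicator (kint k f) := by
    filter_upwards [h1] with p hp
    rw [hp]
    by_cases hps : p.1 ∈ s
    · rw [indicator_of_mem hps, indicator_of_mem (show p ∈ Prod.fst ⁻¹' s from hps)]
      simp only [mul_one, Complex.conj_ofReal, kint]
      push_cast; ring
    · rw [indicator_of_notMem hps, indicator_of_notMem (show p ∉ Prod.fst ⁻¹' s from hps)]
      simp
  rw [integral_congr_ae h2, integral_prod _ (hI.indicator (measurable_fst hs)),
    ← integral_indicator hs]
  refine integral_congr_ae (Eventually.of_forall fun x => ?_)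
  by_cases hx : x ∈ s
  · simp only [indicator_of_mem hx]
    refine integral_congr_ae (Eventually.of_forall fun y => ?_)
    exact indicator_of_mem (show (x, y) ∈ Prod.fst ⁻¹' s from hx) _
  · simp only [indicator_of_notMem hx]
    rw [← integral_zero ℝ ℂ (μ := muI)]
    refine integral_congr_ae (Eventually.of_forall fun y => ?_)
    exact indicator_of_notMem (show (x, y) ∉ Prod.fst ⁻¹' s from hx) _

lemma BB_kernel (f : Lp ℂ 2 muI) :
    BB f =ᵐ[muI] fun x => ∫ y in II,
      ((VV x ^ (-(1 : ℝ) / 2) * (2 * K2 x y - K1 x y) * VV y ^ (-(1 : ℝ) / 2) : ℝ) : ℂ) * f y := by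
  have e : BB f = (2 : ℂ) • BK goodK2 f - BK goodK1 f := rfl
  rw [e]
  filter_upwards [Lp.coeFn_sub ((2 : ℂ) • BK goodK2 f) (BK goodK1 f),
    Lp.coeFn_smul (2 : ℂ) (BK goodK2 f), BK_kernel goodK1 f, BK_kernel goodK2 f,
    kint_integrable_right goodK1 f, kint_integrable_right goodK2 f] with x h1 h2 h3 h4 h5 h6
  rw [h1, Pi.sub_apply, h2, Pi.smul_apply, h3, h4, smul_eq_mul, ← integral_const_mul,
    ← integral_sub (h6.const_mul 2) h5]
  refine integral_congr_ae (Eventually.of_forall fun y => ?_)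
  simp only [kint, vh]
  push_cast; ring

/-! ### Hilbert-Schmidt operators are compact -/

section HS
variable {α : Type*} [MeasurableSpace α] {μ : Measure α} [IsFiniteMeasure μ]

lemma tens_memLp (φ f : Lp ℂ 2 μ) :
    MemLp (fun p : α × α => φ p.1 * conj (f p.2)) 2 (μ.prod μ) := by
  have hm : StronglyMeasurable (fun p : α × α => φ p.1 * conj (f p.2)) :=
    ((Lp.stronglyMeasurable φ).comp_measurable measurable_fst).mul
      (RCLike.continuous_conj.comp_stronglyMeasurable
        ((Lp.stronglyMeasurable f).comp_measurable measurable_snd))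
  rw [memLp_two_iff_integrable_sq_norm hm.aestronglyMeasurable]
  have h1 := (memLp_two_iff_integrable_sq_norm (Lp.aestronglyMeasurable φ)).1 (Lp.memLp φ)
  have h2 := (memLp_two_iff_integrable_sq_norm (Lp.aestronglyMeasurable f)).1 (Lp.memLp f)
  refine (h1.mul_prod h2).congr (Eventually.of_forall fun p => ?_)
  simp only [norm_mul, RCLike.norm_conj, mul_pow]

/-- elementary tensor -/
def tens (φ f : Lp ℂ 2 μ) : Lp ℂ 2 (μ.prod μ) := (tens_memLp φ f).toLp _

lemma tens_coe (φ f : Lp ℂ 2 μ) : tens φ f =ᵐ[μ.prod μ] fun p => φ p.1 * conj (f p.2) :=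
  (tens_memLp φ f).coeFn_toLp

lemma tens_inner (φ f φ' f' : Lp ℂ 2 μ) :
    inner ℂ (tens φ f) (tens φ' f') = inner ℂ φ φ' * inner ℂ f' f := by
  rw [L2.inner_def, L2.inner_def, L2.inner_def, ← integral_prod_mul]
  refine integral_congr_ae ?_
  filter_upwards [tens_coe φ f, tens_coe φ' f'] with p h1 h2
  rw [h1, h2]
  simp only [RCLike.inner_apply, map_mul, RCLike.conj_conj]
  ring

lemma tens_norm (φ f : Lp ℂ 2 μ) : ‖tens φ f‖ = ‖φ‖ * ‖f‖ := by
  have h := tens_inner φ f φ f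
  rw [inner_self_eq_norm_sq_to_K, inner_self_eq_norm_sq_to_K, inner_self_eq_norm_sq_to_K] at h
  have h2 : ‖tens φ f‖ ^ 2 = (‖φ‖ * ‖f‖) ^ 2 := by
    rw [mul_pow]; exact_mod_cast h
  exact (pow_left_inj₀ (norm_nonneg _) (by positivity) (by norm_num)).1 h2

/-- kernels whose operator is compact -/
def compKer (μ : Measure α) [IsFiniteMeasure μ] : Submodule ℂ (Lp ℂ 2 (μ.prod μ)) where
  carrier := {κ | ∃ T : Lp ℂ 2 μ →L[ℂ] Lp ℂ 2 μ, IsCompactOperator T ∧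
    ∀ φ f, inner ℂ φ (T f) = inner ℂ (tens φ f) κ}
  add_mem' := by
    rintro a b ⟨T, hT, h⟩ ⟨T', hT', h'⟩
    refine ⟨T + T', hT.add hT', fun φ f => ?_⟩
    rw [ContinuousLinearMap.add_apply, inner_add_right, inner_add_right, h, h']
  zero_mem' := ⟨0, isCompactOperator_zero, fun φ f => by simp⟩
  smul_mem' := by
    rintro c a ⟨T, hT, h⟩
    refine ⟨c • T, hT.smul c, fun φ f => ?_⟩
    rw [ContinuousLinearMap.smul_apply, inner_smul_right, inner_smul_right, h]

lemma tens_mem (φ f : Lp ℂ 2 μ) : tens φ f ∈ compKer μ := by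
  refine ⟨(ContinuousLinearMap.toSpanSingleton ℂ φ) ∘L (innerSL ℂ f),
    (isCompactOperator_of_locallyCompactSpace_dom (innerSL ℂ f)).clm_comp (ContinuousLinearMap.toSpanSingleton ℂ φ), fun φ' f' => ?_⟩
  rw [tens_inner]
  simp [inner_smul_right, mul_comm]

lemma zero_of_rect {κ : α × α → ℂ} (hκ : Integrable κ (μ.prod μ))
    (h : ∀ s t : Set α, MeasurableSet s → MeasurableSet t →
      ∫ p in s ×ˢ t, κ p ∂(μ.prod μ) = 0) : κ =ᵐ[μ.prod μ] 0 := by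
  refine hκ.ae_eq_zero_of_forall_setIntegral_eq_zero fun s hs _ => ?_
  refine MeasurableSpace.induction_on_inter
    (C := fun s _ => ∫ p in s, κ p ∂(μ.prod μ) = 0) generateFrom_prod.symm isPiSystem_prod
    (by simp) ?_ ?_ ?_ s hs
  · rintro _ ⟨a, ha, b, hb, rfl⟩
    exact h a b ha hb
  · intro t ht h0
    have h1 := integral_add_compl ht hκ
    have h2 := h univ univ MeasurableSet.univ MeasurableSet.univ
    rw [univ_prod_univ, setIntegral_univ] at h2
    rw [h0, h2, zero_add] at h1
    exact h1
  · intro F hd hF h0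
    rw [integral_iUnion hF hd hκ.integrableOn]
    simp [h0]

lemma compKer_dense : (compKer μ).topologicalClosure = ⊤ := by
  rw [Submodule.topologicalClosure_eq_top_iff, Submodule.eq_bot_iff]
  intro κ hκ
  rw [Submodule.mem_orthogonal] at hκ
  rw [Lp.eq_zero_iff_ae_eq_zero]
  refine zero_of_rect ((Lp.memLp κ).integrable one_le_two) fun s t hs ht => ?_
  have h := hκ _ (tens_mem (indicatorConstLp 2 hs (measure_ne_top μ _) (1 : ℂ))
    (indicatorConstLp 2 ht (measure_ne_top μ _) (1 : ℂ)))
  rw [← h, L2.inner_def, ← integral_indicator (hs.prod ht)]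
  refine integral_congr_ae ?_
  have h1 := Measure.quasiMeasurePreserving_fst (μ := μ) (ν := μ) |>.ae
    (indicatorConstLp_coeFn (p := 2) (hs := hs) (hμs := measure_ne_top μ _) (c := (1 : ℂ)))
  have h2 := Measure.quasiMeasurePreserving_snd (μ := μ) (ν := μ) |>.ae
    (indicatorConstLp_coeFn (p := 2) (hs := ht) (hμs := measure_ne_top μ _) (c := (1 : ℂ)))
  filter_upwards [h1, h2, tens_coe (indicatorConstLp 2 hs (measure_ne_top μ _) (1 : ℂ))
    (indicatorConstLp 2 ht (measure_ne_top μ _) (1 : ℂ))] with p h1 h2 h3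
  rw [h3, h1, h2, RCLike.inner_apply]
  by_cases a : p.1 ∈ s
  · by_cases b : p.2 ∈ t
    · rw [indicator_of_mem a, indicator_of_mem b, indicator_of_mem (show p ∈ s ×ˢ t from ⟨a, b⟩)]
      simp
    · rw [indicator_of_notMem b, indicator_of_notMem (fun h : p ∈ s ×ˢ t => b h.2)]
      simp
  · rw [indicator_of_notMem a, indicator_of_notMem (fun h : p ∈ s ×ˢ t => a h.1)]
    simp

lemma opNorm_le_of_inner {T : Lp ℂ 2 μ →L[ℂ] Lp ℂ 2 μ} {C : ℝ} (hC : 0 ≤ C)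
    (h : ∀ φ f, ‖inner ℂ φ (T f)‖ ≤ C * ‖φ‖ * ‖f‖) : ‖T‖ ≤ C := by
  refine ContinuousLinearMap.opNorm_le_bound _ hC fun f => ?_
  have h1 := h (T f) f
  rw [inner_self_eq_norm_sq_to_K] at h1
  have h2 : ‖T f‖ * ‖T f‖ ≤ (C * ‖f‖) * ‖T f‖ := by
    have : ‖((‖T f‖ : ℂ)) ^ 2‖ = ‖T f‖ * ‖T f‖ := by
      rw [norm_pow, Complex.norm_real, norm_norm, sq]
    calc ‖T f‖ * ‖T f‖ = ‖((‖T f‖ : ℂ)) ^ 2‖ := this.symm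
      _ ≤ C * ‖T f‖ * ‖f‖ := h1
      _ = _ := by ring
  rcases eq_or_lt_of_le (norm_nonneg (T f)) with h0 | h0
  · rw [← h0]; positivity
  · exact le_of_mul_le_mul_right h2 h0

lemma compact_of_approx {T : Lp ℂ 2 μ →L[ℂ] Lp ℂ 2 μ}
    (h : ∀ ε > 0, ∃ T' : Lp ℂ 2 μ →L[ℂ] Lp ℂ 2 μ, IsCompactOperator T' ∧ ‖T - T'‖ < ε) :
    IsCompactOperator T := by
  have hc : IsClosed {f : Lp ℂ 2 μ →L[ℂ] Lp ℂ 2 μ | IsCompactOperator f} :=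
    isClosed_setOfPred_isCompactOperator
  have : T ∈ closure {f : Lp ℂ 2 μ →L[ℂ] Lp ℂ 2 μ | IsCompactOperator f} := by
    rw [Metric.mem_closure_iff]
    intro ε hε
    obtain ⟨T', h1, h2⟩ := h ε hε
    exact ⟨T', h1, by rwa [dist_eq_norm]⟩
  rw [hc.closure_eq] at this
  exact this

lemma HS_compact {T : Lp ℂ 2 μ →L[ℂ] Lp ℂ 2 μ} {κ : Lp ℂ 2 (μ.prod μ)}
    (h : ∀ φ f, inner ℂ φ (T f) = inner ℂ (tens φ f) κ) : IsCompactOperator T := by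
  refine compact_of_approx fun ε hε => ?_
  have hκ : κ ∈ closure (compKer μ : Set (Lp ℂ 2 (μ.prod μ))) := by
    rw [← Submodule.topologicalClosure_coe, compKer_dense]; trivial
  obtain ⟨κ', ⟨T', hT', h'⟩, hd⟩ := Metric.mem_closure_iff.1 hκ ε hε
  refine ⟨T', hT', lt_of_le_of_lt (opNorm_le_of_inner (norm_nonneg (κ - κ')) fun φ f => ?_)
    (by rwa [dist_eq_norm] at hd)⟩
  rw [ContinuousLinearMap.sub_apply, inner_sub_right, h, h', ← inner_sub_right]
  refine (norm_inner_le_norm _ _).trans (le_of_eq ?_)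
  rw [tens_norm]; ring

end HS

/-! ### Compactness of B -/

lemma Lp_enorm_sq {α : Type*} [MeasurableSpace α] {μ : Measure α} (f : Lp ℂ 2 μ) :
    ‖f‖ₑ ^ 2 = ∫⁻ a, ‖f a‖ₑ ^ 2 ∂μ := by
  rw [Lp.enorm_def, eLpNorm_eq_lintegral_rpow_enorm_toReal (by norm_num) (by norm_num)]
  simp only [ENNReal.toReal_ofNat, ENNReal.rpow_ofNat]
  rw [← ENNReal.rpow_ofNat, ← ENNReal.rpow_mul]
  norm_num

/-- the indicator function as a real function -/
def ind (S : Set (ℝ × ℝ)) : ℝ × ℝ → ℝ := S.indicator (fun _ => 1)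

lemma measurable_ind {S : Set (ℝ × ℝ)} (hS : MeasurableSet S) : Measurable (ind S) :=
  measurable_const.indicator hS

lemma ind_bd (S : Set (ℝ × ℝ)) (p : ℝ × ℝ) : |ind S p| ≤ 1 := by
  unfold ind
  by_cases h : p ∈ S
  · simp [h]
  · simp [h]

/-- the cut off operator -/
def indOp (k : ℝ → ℝ → ℝ) {S : Set (ℝ × ℝ)} (hS : MeasurableSet S) :
    Lp ℂ 2 (nuk k) →L[ℂ] Lp ℂ 2 (nuk k) :=
  mulOp (ind S) (measurable_ind hS) 1 (Eventually.of_forall (ind_bd S))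

lemma indOp_coe (k : ℝ → ℝ → ℝ) {S : Set (ℝ × ℝ)} (hS : MeasurableSet S) (f : Lp ℂ 2 (nuk k)) :
    indOp k hS f =ᵐ[nuk k] fun p => (ind S p : ℂ) * f p :=
  mulOp_coe (measurable_ind hS) (Eventually.of_forall (ind_bd S)) f

lemma indOp_inner (k : ℝ → ℝ → ℝ) {S : Set (ℝ × ℝ)} (hS : MeasurableSet S)
    (f g : Lp ℂ 2 (nuk k)) : inner ℂ (indOp k hS f) g = inner ℂ f (indOp k hS g) :=
  mulOp_inner (measurable_ind hS) (Eventually.of_forall (ind_bd S)) f g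

lemma indOp_add (k : ℝ → ℝ → ℝ) {S : Set (ℝ × ℝ)} (hS : MeasurableSet S) (f : Lp ℂ 2 (nuk k)) :
    f - indOp k hS f = indOp k hS.compl f := by
  refine Lp.ext ?_
  filter_upwards [Lp.coeFn_sub f (indOp k hS f), indOp_coe k hS f, indOp_coe k hS.compl f]
    with p h1 h2 h3
  rw [h1, Pi.sub_apply, h2, h3]
  unfold ind
  by_cases h : p ∈ S
  · simp [h]
  · simp [h]

/-- the operator with the kernel cut off to `S` -/
def TS {k : ℝ → ℝ → ℝ} (hk : GoodK k) {S : Set (ℝ × ℝ)} (hS : MeasurableSet S) :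
    Lp ℂ 2 muI →L[ℂ] Lp ℂ 2 muI :=
  ContinuousLinearMap.adjoint (Jc Prod.fst (mp_fst hk)).toContinuousLinearMap ∘L
    (indOp k hS ∘L (Jc Prod.snd (mp_snd hk)).toContinuousLinearMap)

lemma TS_inner {k : ℝ → ℝ → ℝ} (hk : GoodK k) {S : Set (ℝ × ℝ)} (hS : MeasurableSet S)
    (φ f : Lp ℂ 2 muI) : inner ℂ φ (TS hk hS f) =
      inner ℂ (Jc Prod.fst (mp_fst hk) φ) (indOp k hS (Jc Prod.snd (mp_snd hk) f)) := by
  unfold TS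
  rw [ContinuousLinearMap.comp_apply, ContinuousLinearMap.adjoint_inner_right]
  rfl

lemma TS_int {k : ℝ → ℝ → ℝ} (hk : GoodK k) {S : Set (ℝ × ℝ)} (hS : MeasurableSet S)
    (φ f : Lp ℂ 2 muI) :
    inner ℂ φ (TS hk hS f) = ∫ p, ((ind S p * (k p.1 p.2 * vh p.1 * vh p.2) : ℝ) : ℂ) *
      (f p.2 * conj (φ p.1)) ∂(muI.prod muI) := by
  have hm : Measurable (fun p : ℝ × ℝ => ENNReal.ofReal (k p.1 p.2)) := hk.meas.ennreal_ofReal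
  have hlt : ∀ᵐ p ∂(muI.prod muI), ENNReal.ofReal (k p.1 p.2) < ∞ :=
    Eventually.of_forall fun p => ENNReal.ofReal_lt_top
  have hae : (fun p => inner ℂ (Jc Prod.fst (mp_fst hk) φ p)
      (indOp k hS (Jc Prod.snd (mp_snd hk) f) p))
      =ᵐ[nuk k] fun p => (ind S p : ℂ) * ((vh p.2 : ℂ) * f p.2) * conj ((vh p.1 : ℂ) * φ p.1) := by
    filter_upwards [Jc_coe Prod.fst (mp_fst hk) φ, Jc_coe Prod.snd (mp_snd hk) f,
      indOp_coe k hS (Jc Prod.snd (mp_snd hk) f)] with p h1 h2 h3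
    rw [h1, h3, h2, RCLike.inner_apply]
  rw [TS_inner, L2.inner_def, integral_congr_ae hae]
  have h := integral_withDensity_eq_integral_toReal_smul₀ hm.aemeasurable hlt
    (fun p : ℝ × ℝ => (ind S p : ℂ) * ((vh p.2 : ℂ) * f p.2) * conj ((vh p.1 : ℂ) * φ p.1))
  refine h.trans (integral_congr_ae (Eventually.of_forall fun p => ?_))
  simp only [ENNReal.toReal_ofReal (hk.nonneg _ _), Complex.real_smul, map_mul,
    Complex.conj_ofReal]
  push_cast; ring

lemma TS_compact {k : ℝ → ℝ → ℝ} (hk : GoodK k) {S : Set (ℝ × ℝ)} (hS : MeasurableSet S)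
    (hL : MemLp (fun p : ℝ × ℝ => ((ind S p * (k p.1 p.2 * vh p.1 * vh p.2) : ℝ) : ℂ)) 2
      (muI.prod muI)) : IsCompactOperator (TS hk hS) := by
  refine HS_compact (κ := hL.toLp _) fun φ f => ?_
  rw [TS_int, L2.inner_def]
  refine integral_congr_ae ?_
  filter_upwards [tens_coe φ f, hL.coeFn_toLp] with p h1 h2
  rw [h1, h2, RCLike.inner_apply]
  simp only [map_mul, RCLike.conj_conj]
  ring

lemma cut_norm {k : ℝ → ℝ → ℝ} (hk : GoodK k) {S : Set (ℝ × ℝ)} (hS : MeasurableSet S)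
    {δ : ℝ} (hδ : 0 ≤ δ)
    (h : ∀ᵐ x ∂muI, ∫⁻ y, S.indicator (fun p => ENNReal.ofReal (k p.1 p.2)) (x, y) ∂muI ≤
      ENNReal.ofReal δ * ENNReal.ofReal (VV x)) (φ : Lp ℂ 2 muI) :
    ‖indOp k hS (Jc Prod.fst (mp_fst hk) φ)‖ ≤ √δ * ‖φ‖ := by
  have e : ‖indOp k hS (Jc Prod.fst (mp_fst hk) φ)‖ₑ ^ 2 ≤ ENNReal.ofReal δ * ‖φ‖ₑ ^ 2 := by
    rw [Lp_enorm_sq, Lp_enorm_sq φ]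
    have hae : (fun p => ‖indOp k hS (Jc Prod.fst (mp_fst hk) φ) p‖ₑ ^ 2) =ᵐ[nuk k]
        fun p => S.indicator (fun p => ‖(vh p.1 : ℂ) * φ p.1‖ₑ ^ 2) p := by
      filter_upwards [Jc_coe Prod.fst (mp_fst hk) φ,
        indOp_coe k hS (Jc Prod.fst (mp_fst hk) φ)] with p h1 h2
      rw [h2, h1]
      unfold ind
      by_cases h : p ∈ S
      · simp [h]
      · simp [h]
    have hm1 : Measurable (fun x => ‖(vh x : ℂ) * φ x‖ₑ ^ 2) :=
      ((Complex.measurable_ofReal.comp measurable_vh).mul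
        (Lp.stronglyMeasurable φ).measurable).enorm.pow_const _
    have hm : Measurable (S.indicator (fun p : ℝ × ℝ => ‖(vh p.1 : ℂ) * φ p.1‖ₑ ^ 2)) :=
      (hm1.comp measurable_fst).indicator hS
    rw [lintegral_congr_ae hae, lintegral_nuk hk hm,
      ← lintegral_const_mul _ ((Lp.stronglyMeasurable φ).measurable.enorm.pow_const _)]
    refine lintegral_mono_ae ?_
    filter_upwards [h, ae_II_Ioo] with x hx hI
    have hV := VV_pos hI.1 hI.2
    have e1 : ∀ y, ENNReal.ofReal (k x y) *
        S.indicator (fun p : ℝ × ℝ => ‖(vh p.1 : ℂ) * φ p.1‖ₑ ^ 2) (x, y) =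
        S.indicator (fun p => ENNReal.ofReal (k p.1 p.2)) (x, y) * ‖(vh x : ℂ) * φ x‖ₑ ^ 2 := by
      intro y
      by_cases h : (x, y) ∈ S
      · simp [h]
      · simp [h]
    simp_rw [e1]
    have hm2 : Measurable fun y => S.indicator (fun p => ENNReal.ofReal (k p.1 p.2)) (x, y) :=
      (hk.meas.ennreal_ofReal.indicator hS).comp (measurable_prodMk_left (x := x))
    rw [lintegral_mul_const _ hm2]
    refine (mul_le_mul_left hx _).trans (le_of_eq ?_)
    have e : ‖(vh x : ℂ) * φ x‖ₑ = ENNReal.ofReal (vh x) * ‖φ x‖ₑ := by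
      rw [enorm_mul]; congr 1
      rw [← ofReal_norm_eq_enorm, Complex.norm_real, Real.norm_of_nonneg (vh_nonneg x)]
    rw [e, mul_pow, mul_assoc, ← mul_assoc (ENNReal.ofReal (VV x)),
      ← ENNReal.ofReal_pow (vh_nonneg x),
      ← ENNReal.ofReal_mul (VV_nonneg x), sq (vh x), vh_sq hV, mul_inv_cancel₀ hV.ne',
      ENNReal.ofReal_one, one_mul]
  have e2 := ENNReal.toReal_mono
    (ENNReal.mul_ne_top ENNReal.ofReal_ne_top (ENNReal.pow_ne_top enorm_ne_top)) e
  rw [ENNReal.toReal_mul, ENNReal.toReal_pow, ENNReal.toReal_pow, toReal_enorm, toReal_enorm,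
    ENNReal.toReal_ofReal hδ] at e2
  refine le_of_sq_le_sq ?_ (by positivity)
  rw [mul_pow, Real.sq_sqrt hδ]; exact e2

lemma BK_compact {k : ℝ → ℝ → ℝ} (hk : GoodK k)
    (h : ∀ δ > 0, ∃ S : Set (ℝ × ℝ), ∃ _ : MeasurableSet S,
      MemLp (fun p : ℝ × ℝ => ((ind S p * (k p.1 p.2 * vh p.1 * vh p.2) : ℝ) : ℂ)) 2
        (muI.prod muI) ∧
      ∀ᵐ x ∂muI, ∫⁻ y, Sᶜ.indicator (fun p => ENNReal.ofReal (k p.1 p.2)) (x, y) ∂muI ≤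
        ENNReal.ofReal δ * ENNReal.ofReal (VV x)) : IsCompactOperator (BK hk) := by
  refine compact_of_approx fun ε hε => ?_
  obtain ⟨S, hS, hL, hs⟩ := h ((ε / 2) ^ 2) (by positivity)
  refine ⟨TS hk hS, TS_compact hk hS hL, lt_of_le_of_lt (opNorm_le_of_inner (C := ε / 2)
    (by positivity) fun φ f => ?_) (by linarith)⟩
  rw [ContinuousLinearMap.sub_apply, inner_sub_right, BK_inner, TS_inner, ← inner_sub_right,
    indOp_add, ← indOp_inner]
  refine (norm_inner_le_norm _ _).trans ?_
  rw [LinearIsometry.norm_map]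
  refine mul_le_mul_of_nonneg_right ?_ (norm_nonneg _)
  have := cut_norm hk hS.compl (by positivity) hs φ
  rwa [Real.sqrt_sq (by positivity)] at this

lemma vh_le {x : ℝ} (h0 : 0 < x) (h1 : x < 2 * π) : vh x ≤ sin (x / 2) ^ (1 / 6 : ℝ) := by
  have hs := sinh_pos h0 h1
  have hV := VV_pos h0 h1
  refine le_of_sq_le_sq ?_ (Real.rpow_nonneg hs.le _)
  rw [sq, vh_sq hV, ← Real.rpow_natCast, ← Real.rpow_mul hs.le]
  have h := VV_lower h0 h1
  rw [inv_le_iff_one_le_mul₀' hV]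
  have e : (1 / 6 : ℝ) * ((2 : ℕ) : ℝ) = 1 / 3 := by norm_num
  rw [e]
  exact h

lemma sin_third_memLp : MemLp (fun p : ℝ × ℝ =>
    ((sin (p.1 / 2) ^ (-(1 / 3) : ℝ)) * (sin (p.2 / 2) ^ (-(1 / 3) : ℝ)) : ℝ)) 2
      (muI.prod muI) := by
  have hm0 : Measurable (fun x : ℝ => sin (x / 2)) := by fun_prop
  have hm1 : Measurable (fun x : ℝ => sin (x / 2) ^ (-(1 / 3) : ℝ)) := hm0.pow_const _
  have hm : Measurable (fun p : ℝ × ℝ =>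
    ((sin (p.1 / 2) ^ (-(1 / 3) : ℝ)) * (sin (p.2 / 2) ^ (-(1 / 3) : ℝ)) : ℝ)) :=
    (hm1.comp measurable_fst).mul (hm1.comp measurable_snd)
  rw [memLp_two_iff_integrable_sq hm.aestronglyMeasurable]
  have hi : Integrable (fun x : ℝ => sin (x / 2) ^ (-(2 / 3) : ℝ)) muI := by
    refine ⟨(hm0.pow_const _).aestronglyMeasurable, ?_⟩
    have h := lint_sin_rpow (s := 2 / 3) (by norm_num) (by norm_num)
    rw [hasFiniteIntegral_iff_ofReal]
    · exact h
    · filter_upwards [ae_II_Ioo] with x hx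
      exact Real.rpow_nonneg (sinh_pos hx.1 hx.2).le _
  refine (hi.mul_prod hi).congr ?_
  filter_upwards [ae_prod_Ioo] with p hp
  have a := sinh_pos hp.1.1 hp.1.2
  have b := sinh_pos hp.2.1 hp.2.2
  rw [mul_pow, ← Real.rpow_natCast, ← Real.rpow_natCast, ← Real.rpow_mul a.le, ← Real.rpow_mul b.le]
  norm_num

lemma ker_memLp {k : ℝ → ℝ → ℝ} (hk : GoodK k) {S : Set (ℝ × ℝ)} (hS : MeasurableSet S) (C : ℝ)
    (h : ∀ p : ℝ × ℝ, (0 < p.1 ∧ p.1 < 2 * π) ∧ (0 < p.2 ∧ p.2 < 2 * π) → p ∈ S →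
      k p.1 p.2 ≤ C * (sin (p.1 / 2) ^ (-(1 / 2) : ℝ) * sin (p.2 / 2) ^ (-(1 / 2) : ℝ)))
    (hC : 0 ≤ C) :
    MemLp (fun p : ℝ × ℝ => ((ind S p * (k p.1 p.2 * vh p.1 * vh p.2) : ℝ) : ℂ)) 2
      (muI.prod muI) := by
  have hm : Measurable (fun p : ℝ × ℝ => ind S p * (k p.1 p.2 * vh p.1 * vh p.2)) :=
    (measurable_ind hS).mul ((hk.meas.mul (measurable_vh.comp measurable_fst)).mul
      (measurable_vh.comp measurable_snd))
  refine sin_third_memLp.of_le_mul (c := C)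
    (Complex.measurable_ofReal.comp hm).aestronglyMeasurable ?_
  filter_upwards [ae_prod_Ioo] with p hp
  have a := sinh_pos hp.1.1 hp.1.2
  have b := sinh_pos hp.2.1 hp.2.2
  have nn : 0 ≤ (sin (p.1 / 2) ^ (-(1 / 3) : ℝ)) * (sin (p.2 / 2) ^ (-(1 / 3) : ℝ)) := by positivity
  rw [Complex.norm_real, Real.norm_of_nonneg nn]
  by_cases hpS : p ∈ S
  · have e : ind S p = 1 := by unfold ind; simp [hpS]
    have k0 := hk.nonneg p.1 p.2
    rw [e, one_mul, Real.norm_of_nonneg (mul_nonneg (mul_nonneg k0 (vh_nonneg _)) (vh_nonneg _))]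
    calc k p.1 p.2 * vh p.1 * vh p.2 ≤
        (C * (sin (p.1 / 2) ^ (-(1 / 2) : ℝ) * sin (p.2 / 2) ^ (-(1 / 2) : ℝ)))
          * sin (p.1 / 2) ^ (1 / 6 : ℝ) * sin (p.2 / 2) ^ (1 / 6 : ℝ) := by
          have h1 := h p hp hpS
          have h2 := vh_le hp.1.1 hp.1.2
          have h3 := vh_le hp.2.1 hp.2.2
          have := vh_nonneg p.1
          have := vh_nonneg p.2
          gcongr
      _ = C * ((sin (p.1 / 2) ^ (-(1 / 2) : ℝ) * sin (p.1 / 2) ^ (1 / 6 : ℝ)) *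
          (sin (p.2 / 2) ^ (-(1 / 2) : ℝ) * sin (p.2 / 2) ^ (1 / 6 : ℝ))) := by ring
      _ = _ := by
          rw [← Real.rpow_add a, ← Real.rpow_add b]; norm_num
  · have e : ind S p = 0 := by unfold ind; simp [hpS]
    rw [e, zero_mul, norm_zero]
    positivity

lemma BK2_compact : IsCompactOperator (BK goodK2) := by
  refine BK_compact goodK2 fun δ hδ => ⟨univ, MeasurableSet.univ, ?_, ?_⟩
  · refine ker_memLp goodK2 MeasurableSet.univ 1 (fun p hp _ => ?_) zero_le_one
    rw [one_mul]
    exact K2_le hp.1.1 hp.1.2 hp.2.1 hp.2.2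
  · exact Eventually.of_forall fun x => by simp

lemma BK1_compact : IsCompactOperator (BK goodK1) := by
  refine BK_compact goodK1 fun δ hδ => ?_
  obtain ⟨ε, e0, e1, e2⟩ : ∃ ε : ℝ, 0 < ε ∧ ε ≤ 1 ∧ 3200 * √ε ≤ δ := by
    refine ⟨min 1 ((δ / 3200) ^ 2), lt_min one_pos (by positivity), min_le_left _ _, ?_⟩
    have : √(min 1 ((δ / 3200) ^ 2)) ≤ δ / 3200 := by
      rw [← Real.sqrt_sq (show 0 ≤ δ / 3200 by positivity)]
      refine Real.sqrt_le_sqrt ?_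
      rw [Real.sqrt_sq (show 0 ≤ δ / 3200 by positivity)]
      exact min_le_right _ _
    linarith
  refine ⟨(singSet ε)ᶜ, (measurable_singSet ε).compl, ?_, ?_⟩
  · refine ker_memLp goodK1 (measurable_singSet ε).compl (4 / √ε) (fun p hp hpS => ?_) (by positivity)
    have a := sinh_pos hp.1.1 hp.1.2
    have b := sinh_pos hp.2.1 hp.2.2
    unfold K1
    split_ifs with hF
    · have hge : ε * (sin (p.1 / 2) * sin (p.2 / 2)) ≤ Fm p.1 p.2 := by
        by_contra hlt
        exact hpS ⟨hF, not_le.1 hlt⟩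
      rw [← Real.mul_rpow a.le b.le, Real.rpow_neg (by positivity), ← Real.sqrt_eq_rpow,
        div_mul_eq_mul_div, ← div_eq_mul_inv, div_div, mul_comm (√_) (√ε), 
        ← Real.sqrt_mul e0.le]
      exact div_le_div_of_nonneg_left (by norm_num) (Real.sqrt_pos.2 (by positivity))
        (Real.sqrt_le_sqrt hge)
    · positivity
  · filter_upwards [ae_II_Ioo] with x hx
    rw [compl_compl]
    refine (sing_est e0 e1 hx.1 hx.2).trans ?_
    gcongr

lemma BB_compact : IsCompactOperator BB := by
  unfold BB
  exact (BK2_compact.smul (2 : ℂ)).sub BK1_compact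

/-! ### Parity and the operator L -/

/-- the parity operator -/
def PP : Lp ℂ 2 muI →L[ℂ] Lp ℂ 2 muI :=
  (Lp.compMeasurePreservingₗᵢ ℂ (fun x => 2 * π - x) measurePreserving_refl).toContinuousLinearMap

lemma PP_coe (f : Lp ℂ 2 muI) : PP f =ᵐ[muI] fun x => f (2 * π - x) :=
  Lp.coeFn_compMeasurePreserving f measurePreserving_refl

lemma BB_PP : BB ∘L PP = PP ∘L BB := by
  ext1 f
  rw [ContinuousLinearMap.comp_apply, ContinuousLinearMap.comp_apply]
  refine Lp.ext ?_
  filter_upwards [BB_kernel (PP f), PP_coe (BB f),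
    measurePreserving_refl.quasiMeasurePreserving.ae (BB_kernel f), ae_II_Ioo] with x h1 h2 h3 hx
  rw [h1, h2, h3]
  have h4 := measurePreserving_refl.integral_comp refl_emb (fun y =>
    ((VV (2 * π - x) ^ (-(1 : ℝ) / 2) * (2 * K2 (2 * π - x) y - K1 (2 * π - x) y) *
      VV y ^ (-(1 : ℝ) / 2) : ℝ) : ℂ) * f y)
  refine Eq.trans ?_ h4
  refine integral_congr_ae ?_
  filter_upwards [PP_coe f] with y hy
  rw [hy, VV_refl, VV_refl, K1_refl, K2_refl]

/-- the weight W^(1/2) -/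
def wh (x : ℝ) : ℝ := √(WW x)

lemma measurable_WW : Measurable WW := by
  unfold WW
  have hm0 : Measurable (fun x : ℝ => sin (x / 2) ^ 2) := by fun_prop
  exact hm0.mul measurable_VV

lemma measurable_wh : Measurable wh := measurable_WW.sqrt

lemma WW_nonneg (x : ℝ) : 0 ≤ WW x := mul_nonneg (sq_nonneg _) (VV_nonneg x)

lemma WW_refl (x : ℝ) : WW (2 * π - x) = WW x := by
  unfold WW; rw [VV_refl, (sincos_refl x).2]

lemma wh_bd : ∀ᵐ x ∂muI, |wh x| ≤ √S12 := by
  filter_upwards [ae_II_Ioo] with x hx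
  have a := sinh_pos hx.1 hx.2
  unfold wh
  rw [abs_of_nonneg (Real.sqrt_nonneg _)]
  refine Real.sqrt_le_sqrt ?_
  have h := VV_le hx.1 hx.2
  have hS : 0 ≤ S12 := by
    by_contra hneg
    have := VV_pos hx.1 hx.2
    have h2 : sin (x / 2) ^ (-(1 / 2) : ℝ) * S12 ≤ 0 :=
      mul_nonpos_of_nonneg_of_nonpos (Real.rpow_nonneg a.le _) (not_le.1 hneg).le
    linarith
  calc WW x ≤ sin (x / 2) ^ 2 * (sin (x / 2) ^ (-(1 / 2) : ℝ) * S12) := by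
        unfold WW; gcongr
    _ = sin (x / 2) ^ (3 / 2 : ℝ) * S12 := by
        rw [← mul_assoc, ← Real.rpow_natCast, ← Real.rpow_add a]; norm_num
    _ ≤ 1 * S12 := by
        gcongr
        exact Real.rpow_le_one a.le (Real.sin_le_one _) (by norm_num)
    _ = S12 := one_mul _

/-- multiplication by W^(1/2) -/
def Mw : Lp ℂ 2 muI →L[ℂ] Lp ℂ 2 muI := mulOp wh measurable_wh (√S12) wh_bd

lemma Mw_coe (f : Lp ℂ 2 muI) : Mw f =ᵐ[muI] fun x => (wh x : ℂ) * f x :=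
  mulOp_coe measurable_wh wh_bd f

lemma Mw_adj : ContinuousLinearMap.adjoint Mw = Mw := mulOp_adj measurable_wh wh_bd

lemma Mw_PP : Mw ∘L PP = PP ∘L Mw := by
  ext1 f
  rw [ContinuousLinearMap.comp_apply, ContinuousLinearMap.comp_apply]
  refine Lp.ext ?_
  filter_upwards [Mw_coe (PP f), PP_coe (Mw f), PP_coe f,
    measurePreserving_refl.quasiMeasurePreserving.ae (Mw_coe f)] with x h1 h2 h3 h4
  rw [h1, h2, h3, h4]
  unfold wh
  rw [WW_refl]

/-- the operator L -/
def LL : Lp ℂ 2 muI →L[ℂ] Lp ℂ 2 muI := Mw ∘L (1 - BB) ∘L Mw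

lemma LL_pos : LL.IsPositive := by
  have h := one_sub_BB_pos.conj_adjoint Mw
  rw [Mw_adj] at h
  exact h

lemma LL_PP : LL ∘L PP = PP ∘L LL := by
  ext1 f
  have h1 : ∀ g, Mw (PP g) = PP (Mw g) := fun g => congrArg (fun T => T g) Mw_PP
  have h2 : ∀ g, BB (PP g) = PP (BB g) := fun g => congrArg (fun T => T g) BB_PP
  change Mw (Mw (PP f) - BB (Mw (PP f))) = PP (Mw (Mw f - BB (Mw f)))
  rw [h1, h2, ← map_sub, h1]

lemma wh_vh {x : ℝ} (h0 : 0 < x) (h1 : x < 2 * π) : wh x * vh x = omg x := by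
  have hs := sinh_pos h0 h1
  have hV := VV_pos h0 h1
  have e : wh x = sin (x / 2) * √(VV x) := by
    unfold wh WW
    rw [Real.sqrt_mul (sq_nonneg _), Real.sqrt_sq hs.le]
  have e2 : √(VV x) * vh x = 1 := by
    unfold vh
    rw [Real.sqrt_eq_rpow, ← Real.rpow_add hV]; norm_num
  rw [e, mul_assoc, e2, mul_one]
  unfold omg
  rw [abs_of_pos hs]

lemma LL_kernel (f : Lp ℂ 2 muI) :
    LL f =ᵐ[muI] fun x => ((WW x : ℝ) : ℂ) * f x +
            ∫ y in II, ((omg x * (K1 x y - 2 * K2 x y) * omg y : ℝ) : ℂ) * f y := by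
  change Mw (Mw f - BB (Mw f)) =ᵐ[muI] _
  filter_upwards [Mw_coe (Mw f - BB (Mw f)), Lp.coeFn_sub (Mw f) (BB (Mw f)), Mw_coe f,
    BB_kernel (Mw f), ae_II_Ioo] with x h1 h2 h3 h4 hx
  rw [h1, h2, Pi.sub_apply, h3, h4, mul_sub, sub_eq_add_neg]
  congr 1
  · rw [← mul_assoc, ← Complex.ofReal_mul]
    unfold wh
    rw [Real.mul_self_sqrt (WW_nonneg x)]
  · rw [← integral_const_mul, ← integral_neg]
    refine integral_congr_ae ?_
    filter_upwards [Mw_coe f, ae_II_Ioo] with y hy hy2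
    rw [hy, ← wh_vh hx.1 hx.2, ← wh_vh hy2.1 hy2.2]
    unfold vh
    push_cast; ring

/-- **Proposition 2.3.**  There are operators `L̃`, `B`, `P` on `L²(I)` (acting respectively
as `W + ω(K₁−2K₂)ω`, as the integral operator with kernel `V^{−1/2}(2K₂−K₁)V^{−1/2}`, and as
the parity `ψ(x) ↦ ψ(2π−x)`) such that: `L̃` is bounded (it exists as a continuous linear
map), positive and self-adjoint; `B` is compact and self-adjoint; both commute with `P`;
`B ≤ 1`; and `Bψ = ψ` iff the periodic extension of `V^{−1/2}ψ` is a collisional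
invariant. -/
theorem tildeL_and_B_properties :
    ∃ Lt Bop Pop : Lp ℂ 2 muI →L[ℂ] Lp ℂ 2 muI,
      (∀ f : Lp ℂ 2 muI,
        (Lt f : ℝ → ℂ) =ᵐ[muI]
          fun x => ((WW x : ℝ) : ℂ) * f x +
            ∫ y in II, ((omg x * (K1 x y - 2 * K2 x y) * omg y : ℝ) : ℂ) * f y) ∧
      (∀ f : Lp ℂ 2 muI,
        (Bop f : ℝ → ℂ) =ᵐ[muI]
          fun x => ∫ y in II,
            ((VV x ^ (-(1 : ℝ) / 2) * (2 * K2 x y - K1 x y) * VV y ^ (-(1 : ℝ) / 2) : ℝ) : ℂ)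
              * f y) ∧
      (∀ f : Lp ℂ 2 muI, (Pop f : ℝ → ℂ) =ᵐ[muI] fun x => f (2 * π - x)) ∧
      IsSelfAdjoint Lt ∧ Lt.IsPositive ∧
      IsCompactOperator Bop ∧ IsSelfAdjoint Bop ∧
      Lt ∘L Pop = Pop ∘L Lt ∧ Bop ∘L Pop = Pop ∘L Bop ∧
      (1 - Bop).IsPositive ∧
      (∀ ψ : Lp ℂ 2 muI, Bop ψ = ψ ↔
        ∀ᵐ p : ℝ × ℝ,
          periodicVinvHalf ψ p.1 + periodicVinvHalf ψ (hFPU p.1 p.2)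
            - periodicVinvHalf ψ p.2
            - periodicVinvHalf ψ (p.1 - p.2 + hFPU p.1 p.2) = 0) := by
  exact ⟨LL, BB, PP, LL_kernel, BB_kernel, PP_coe, LL_pos.isSelfAdjoint, LL_pos, BB_compact,
    BB_sa, LL_PP, BB_PP, one_sub_BB_pos,
    fun ψ => (BB_fix ψ).trans ((AA_zero ψ).trans (collis_iff ψ))⟩
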